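/- arXiv:0711.2820 — 2 statements merged into one kernel-verified Lean document; each statement's English description precedes it below -/
import Mathlib

section
/- (Kozyrev's wavelet basis.) For ν = 1,…,p−1 define ψ^{(ν)}(x) = χ_p((ν/p)x) Ω(|x|_p), x ∈ ℚ_p. Then the system {p^{j/2} ψ^{(ν)}(p^{−j}x − a) : j ∈ ℤ, a ∈ I_p, ν = 1,…,p−1} is an orthonormal basis of L²(ℚ_p). -/
open MeasureTheory Metric

noncomputable section

variable {p : ℕ} [Fact p.Prime]

instance : MeasurableSpace ℚ_[p] := borel _
instance : BorelSpace ℚ_[p] := ⟨rfl⟩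

/-- `I_p`: the set of `p`-adic fractional parts, i.e. numbers `a / p^γ` with
`0 ≤ a < p^γ` (in particular `0 ∈ I_p`). -/
def Ip (p : ℕ) [Fact p.Prime] : Set ℚ_[p] :=
  {x | ∃ γ a : ℕ, a < p ^ γ ∧ x = (a : ℚ_[p]) / (p : ℚ_[p]) ^ γ}

/-- The `p`-adic fractional part `{x}_p` of `x ∈ ℚ_p` (as a rational number). -/
def padicFrac {p : ℕ} [Fact p.Prime] (x : ℚ_[p]) : ℚ :=
  let γ : ℕ := (-x.valuation).toNat
  if h : ‖x * (p : ℚ_[p]) ^ γ‖ ≤ 1 then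
    (PadicInt.appr (⟨x * (p : ℚ_[p]) ^ γ, h⟩ : ℤ_[p]) γ : ℚ) / (p : ℚ) ^ γ
  else 0

/-- The standard additive character `χ_p(x) = exp(2πi {x}_p)` of `ℚ_p`. -/
def padicChar {p : ℕ} [Fact p.Prime] (x : ℚ_[p]) : ℂ :=
  Complex.exp (2 * Real.pi * Complex.I * (padicFrac x : ℂ))

/-- `Ω : [0,∞) → ℝ`, `Ω(t) = 1` for `t ∈ [0,1]`, `Ω(t) = 0` otherwise. -/
def Omega : ℝ → ℝ := Set.indicator (Set.Icc 0 1) fun _ => 1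

/-!
On a ball of radius `p^{-j}` the wavelet is, up to a scalar, the character of frequency
`ν p^{-(j+1)}`. Two wavelets with different `(j, ν)` have frequencies at distance
`p^{max(j, j') + 1}`, so translation by `p^{max(j, j')}`, which preserves both balls, multiplies
their product by a nontrivial root of unity, and they are orthogonal. Two wavelets with the same
`(j, ν)` and different `a` live on disjoint balls.

For completeness, let `g` be orthogonal to all wavelets. On a ball of radius `p^{-j}` the characters
of frequency `ν p^{-(j+1)}`, `0 ≤ ν < p`, sum to `p` times the indicator of the concentric ball of
radius `p^{-(j+1)}`. Only `ν = 0` contributes to the inner product with `g`, so the integral of `g`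
over concentric balls is proportional to the radius. By Cauchy–Schwarz it is at most the square root
of the radius times the norm of `g`, hence it vanishes. Since balls form a π-system generating the
Borel sets, `g = 0`.
-/

section PiSystem

variable {α E : Type*} [mα : MeasurableSpace α] [NormedAddCommGroup E] [NormedSpace ℝ E]

theorem ae_eq_zero_of_setIntegral_eq_zero_of_isPiSystem [CompleteSpace E] {μ : Measure α}
    {C S : Set (Set α)} (hgen : mα = MeasurableSpace.generateFrom C) (hpi : IsPiSystem C)
    (hSC : S ⊆ C) (hS : S.Countable) (hcover : ⋃₀ S = Set.univ) {f : α → E}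
    (hint : ∀ s ∈ S, IntegrableOn f s μ) (hzero : ∀ s ∈ C, ∫ x in s, f x ∂μ = 0) :
    f =ᵐ[μ] 0 := by
  have hmeas : ∀ s ∈ C, MeasurableSet s := fun s hs =>
    hgen ▸ MeasurableSpace.measurableSet_generateFrom hs
  have hrestrict : ∀ b ∈ S, ∀ᵐ x ∂μ.restrict b, f x = 0 := by
    intro b hb
    have hdensity : (μ.restrict b).withDensityᵥ f = (μ.restrict b).withDensityᵥ 0 := by
      refine VectorMeasure.ext_of_generateFrom C (fun s hs => ?_) hgen hpi ?_
      · rw [withDensityᵥ_apply (hint b hb) (hmeas s hs), withDensityᵥ_zero,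
          Measure.restrict_restrict (hmeas s hs)]
        rcases (s ∩ b).eq_empty_or_nonempty with hempty | hne
        · simp [hempty]
        · exact hzero _ (hpi s hs b (hSC hb) hne)
      · rw [withDensityᵥ_apply (hint b hb) .univ, withDensityᵥ_zero, Measure.restrict_univ]
        exact hzero b (hSC hb)
    exact (hint b hb).ae_eq_of_withDensityᵥ_eq (integrable_zero α E _) hdensity
  rw [Filter.EventuallyEq, ← Measure.restrict_univ (μ := μ), ← hcover, Set.sUnion_eq_biUnion,
    ae_restrict_biUnion_iff _ hS]
  exact hrestrict

end PiSystem

theorem integral_eq_zero_of_add_right_eq_smul {G 𝕜 E : Type*} [AddGroup G] [MeasurableSpace G]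
    [MeasurableAdd G] [NormedField 𝕜] [NormedAddCommGroup E] [NormedSpace ℝ E] [NormedSpace 𝕜 E]
    [SMulCommClass ℝ 𝕜 E] {μ : Measure G} [μ.IsAddRightInvariant] {f : G → E} {g : G} {k : 𝕜}
    (hk : k ≠ 1) (hf : ∀ x, f (x + g) = k • f x) : ∫ x, f x ∂μ = 0 := by
  have hfix : k • ∫ x, f x ∂μ = ∫ x, f x ∂μ := by
    rw [← integral_smul, ← integral_add_right_eq_self f g]
    simp only [hf]
  have hsub : (k - 1) • ∫ x, f x ∂μ = 0 := by rw [sub_smul, hfix, one_smul, sub_self]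
  exact (smul_eq_zero.1 hsub).resolve_left (sub_ne_zero.2 hk)

theorem inner_memLp_toLp {α 𝕜 E : Type*} [MeasurableSpace α] [RCLike 𝕜] [NormedAddCommGroup E]
    [InnerProductSpace 𝕜 E] {μ : Measure α} {f g : α → E} (hf : MemLp f 2 μ) (hg : MemLp g 2 μ) :
    inner 𝕜 (hf.toLp f) (hg.toLp g) = ∫ x, inner 𝕜 (f x) (g x) ∂μ := by
  rw [L2.inner_def]
  refine integral_congr_ae ?_
  filter_upwards [hf.coeFn_toLp, hg.coeFn_toLp] with x hfx hgx
  rw [hfx, hgx]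

section Ultrametric

variable {X : Type*} [PseudoMetricSpace X] [IsUltrametricDist X] {R : Set ℝ}

theorem isPiSystem_image2_closedBall : IsPiSystem (Set.image2 closedBall (Set.univ : Set X) R) := by
  rintro _ ⟨c, -, r, hr, rfl⟩ _ ⟨c', -, r', hr', rfl⟩ ⟨x, hx, hx'⟩
  rw [IsUltrametricDist.closedBall_eq_of_mem hx, IsUltrametricDist.closedBall_eq_of_mem hx']
  rcases le_total r r' with h | h
  · rw [Set.inter_eq_left.2 (closedBall_subset_closedBall h)]
    exact ⟨x, trivial, r, hr, rfl⟩
  · rw [Set.inter_eq_right.2 (closedBall_subset_closedBall h)]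
    exact ⟨x, trivial, r', hr', rfl⟩

theorem borel_eq_generateFrom_closedBall [SecondCountableTopology X] (hpos : ∀ r ∈ R, 0 < r)
    (hsmall : ∀ ε > 0, ∃ r ∈ R, r < ε) :
    borel X = MeasurableSpace.generateFrom (Set.image2 closedBall (Set.univ : Set X) R) := by
  refine (TopologicalSpace.isTopologicalBasis_of_isOpen_of_nhds ?_ ?_).borel_eq_generateFrom
  · rintro _ ⟨c, -, r, hr, rfl⟩
    exact IsUltrametricDist.isOpen_closedBall c (hpos r hr).ne'
  · intro x u hx hu
    obtain ⟨ε, hε, hball⟩ := Metric.isOpen_iff.1 hu x hx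
    obtain ⟨r, hr, hrε⟩ := hsmall ε hε
    exact ⟨_, ⟨x, trivial, r, hr, rfl⟩, mem_closedBall_self (hpos r hr).le,
      (closedBall_subset_ball hrε).trans hball⟩

end Ultrametric

theorem eq_zpow_neg_mul_of_forall_eq_mul_succ {K : Type*} [Field K] {a : K} (ha : a ≠ 0)
    {f : ℤ → K} (hf : ∀ j, f j = a * f (j + 1)) (j : ℤ) : f j = a ^ (-j) * f 0 := by
  induction j using Int.induction_on with
  | zero => simp
  | succ n ih =>
    refine mul_left_cancel₀ ha ?_
    rw [← hf, ih, ← mul_assoc, ← zpow_one_add₀ ha]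
    congr 2
    ring
  | pred n ih =>
    rw [hf, sub_add_cancel, ih, ← mul_assoc, ← zpow_one_add₀ ha]
    congr 2
    ring

theorem den_natCast_div_natCast_dvd (a b : ℕ) : ((a : ℚ) / b).den ∣ b := by
  rw [← Int.natCast_dvd_natCast, ← Int.cast_natCast a, ← Int.cast_natCast b,
    ← Rat.divInt_eq_div]
  exact Rat.den_dvd a b

section PadicFractionalPart

theorem den_eq_one_of_den_dvd_pow_of_padic_norm_le_one {q : ℚ} {n : ℕ} (hden : q.den ∣ p ^ n)
    (hnorm : ‖(q : ℚ_[p])‖ ≤ 1) : q.den = 1 := by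
  have hunit : ‖(q.den : ℚ_[p])‖ = 1 := by
    simpa using PadicInt.isUnit_iff.1 (PadicInt.isUnit_den q hnorm)
  have hcoprime : p.Coprime q.den := Padic.norm_natCast_eq_one_iff.1 hunit
  exact (hcoprime.pow_left n).symm.eq_one_of_dvd hden

theorem norm_mul_pow_toNat_neg_valuation_le_one (x : ℚ_[p]) :
    ‖x * (p : ℚ_[p]) ^ (-x.valuation).toNat‖ ≤ 1 := by
  have hp : (p : ℚ_[p]) ≠ 0 := mod_cast (Fact.out : p.Prime).ne_zero
  rcases eq_or_ne x 0 with rfl | hx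
  · simp
  · rw [Padic.norm_le_one_iff_val_nonneg, Padic.valuation_mul hx (pow_ne_zero _ hp),
      Padic.valuation_pow, Padic.valuation_p]
    lia

theorem padicFrac_eq_appr_div (x : ℚ_[p]) :
    padicFrac x =
      (PadicInt.appr ⟨_, norm_mul_pow_toNat_neg_valuation_le_one x⟩ (-x.valuation).toNat : ℚ) /
        (p : ℚ) ^ (-x.valuation).toNat :=
  dif_pos _

theorem norm_sub_padicFrac_le_one (x : ℚ_[p]) : ‖x - (padicFrac x : ℚ_[p])‖ ≤ 1 := by
  have hp : (p : ℚ_[p]) ≠ 0 := mod_cast (Fact.out : p.Prime).ne_zero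
  rw [padicFrac_eq_appr_div]
  set γ := (-x.valuation).toNat
  set y : ℤ_[p] := ⟨x * (p : ℚ_[p]) ^ γ, norm_mul_pow_toNat_neg_valuation_le_one x⟩ with hy
  have happr : ‖((y - (y.appr γ : ℤ_[p]) : ℤ_[p]) : ℚ_[p])‖ ≤ (p : ℝ) ^ (-γ : ℤ) :=
    (PadicInt.norm_le_pow_iff_mem_span_pow _ γ).2 (PadicInt.appr_spec γ y)
  have hsub : x - (((y.appr γ : ℚ) / (p : ℚ) ^ γ : ℚ) : ℚ_[p]) =
      ((y - (y.appr γ : ℤ_[p]) : ℤ_[p]) : ℚ_[p]) / (p : ℚ_[p]) ^ γ := by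
    push_cast
    rw [hy]
    field_simp
  rw [hsub, norm_div, Padic.norm_p_pow]
  exact div_le_one_of_le₀ happr (by positivity)

theorem padicFrac_mem_Ip (x : ℚ_[p]) : (padicFrac x : ℚ_[p]) ∈ Ip p :=
  ⟨_, _, PadicInt.appr_lt _ _, by rw [padicFrac_eq_appr_div]; push_cast; rfl⟩

theorem exists_den_padicFrac_dvd_pow (x : ℚ_[p]) : ∃ n, (padicFrac x).den ∣ p ^ n := by
  refine ⟨(-x.valuation).toNat, ?_⟩
  rw [padicFrac_eq_appr_div]
  exact_mod_cast den_natCast_div_natCast_dvd _ _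

theorem eq_of_mem_Ip_of_norm_sub_le_one {a b : ℚ_[p]} (ha : a ∈ Ip p) (hb : b ∈ Ip p)
    (hab : ‖a - b‖ ≤ 1) : a = b := by
  have hpow : ∀ n, (0 : ℚ) < (p ^ n : ℕ) := fun n => mod_cast pow_pos (Fact.out : p.Prime).pos n
  obtain ⟨n, k, hk, rfl⟩ := ha
  obtain ⟨m, l, hl, rfl⟩ := hb
  set s : ℚ := (k : ℚ) / (p ^ n : ℕ) with hs
  set t : ℚ := (l : ℚ) / (p ^ m : ℕ) with ht
  have hden : (s - t).den ∣ p ^ (n + m) :=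
    (Rat.sub_den_dvd s t).trans <| pow_add p n m ▸
      mul_dvd_mul (den_natCast_div_natCast_dvd k _) (den_natCast_div_natCast_dvd l _)
  have hint : (s - t).den = 1 :=
    den_eq_one_of_den_dvd_pow_of_padic_norm_le_one hden (by push_cast [hs, ht]; exact hab)
  have hlt_one : |s - t| < 1 := by
    have hs_mem : 0 ≤ s ∧ s < 1 :=
      ⟨by positivity, (div_lt_one (hpow n)).2 (mod_cast hk)⟩
    have ht_mem : 0 ≤ t ∧ t < 1 :=
      ⟨by positivity, (div_lt_one (hpow m)).2 (mod_cast hl)⟩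
    rw [abs_lt]
    constructor <;> linarith
  have hst : s = t := by
    rw [← Rat.coe_int_num_of_den_eq_one hint] at hlt_one
    have hnum : (s - t).num = 0 := Int.abs_lt_one_iff.1 (mod_cast hlt_one)
    exact sub_eq_zero.1 (Rat.num_eq_zero.1 hnum)
  have hcast : (s : ℚ_[p]) = t := congrArg _ hst
  push_cast [hs, ht] at hcast
  exact hcast

end PadicFractionalPart

section PadicCharacter

theorem padicChar_eq_exp {x : ℚ_[p]} {q : ℚ} {n : ℕ} (hq : q.den ∣ p ^ n)
    (hx : ‖x - q‖ ≤ 1) : padicChar x = Complex.exp (2 * Real.pi * Complex.I * q) := by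
  obtain ⟨m, hm⟩ := exists_den_padicFrac_dvd_pow x
  have hden : (padicFrac x - q).den ∣ p ^ (m + n) :=
    (Rat.sub_den_dvd _ _).trans (pow_add p m n ▸ mul_dvd_mul hm hq)
  have hnorm : ‖((padicFrac x - q : ℚ) : ℚ_[p])‖ ≤ 1 := by
    have hsplit : ((padicFrac x - q : ℚ) : ℚ_[p]) = (x - q) - (x - padicFrac x) := by
      push_cast; ring
    rw [hsplit]
    exact (PadicInt.subring p).sub_mem hx (norm_sub_padicFrac_le_one x)
  have hint := Rat.coe_int_num_of_den_eq_one
    (den_eq_one_of_den_dvd_pow_of_padic_norm_le_one hden hnorm)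
  rw [padicChar, Complex.exp_eq_exp_iff_exists_int]
  refine ⟨(padicFrac x - q).num, ?_⟩
  have hcast : ((padicFrac x - q).num : ℂ) = padicFrac x - q := mod_cast congrArg (Rat.cast) hint
  rw [hcast]
  ring

theorem padicChar_eq_one_iff {x : ℚ_[p]} : padicChar x = 1 ↔ ‖x‖ ≤ 1 := by
  constructor
  · intro h
    obtain ⟨z, hz⟩ := Complex.exp_eq_one_iff.1 h
    have hfrac : (padicFrac x : ℂ) = z :=
      mul_left_cancel₀ Complex.two_pi_I_ne_zero (hz.trans (mul_comm _ _))
    have hsub := norm_sub_padicFrac_le_one x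
    rw [show padicFrac x = z from mod_cast hfrac, Rat.cast_intCast] at hsub
    simpa using (PadicInt.subring p).add_mem hsub (Padic.norm_int_le_one z)
  · intro h
    rw [padicChar_eq_exp (q := 0) (n := 0) (by simp) (by simpa using h)]
    simp

theorem padicChar_add (x y : ℚ_[p]) : padicChar (x + y) = padicChar x * padicChar y := by
  obtain ⟨n, hn⟩ := exists_den_padicFrac_dvd_pow x
  obtain ⟨m, hm⟩ := exists_den_padicFrac_dvd_pow y
  have hden : (padicFrac x + padicFrac y).den ∣ p ^ (n + m) :=
    (Rat.add_den_dvd _ _).trans (pow_add p n m ▸ mul_dvd_mul hn hm)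
  have hnorm : ‖x + y - ((padicFrac x + padicFrac y : ℚ) : ℚ_[p])‖ ≤ 1 := by
    rw [Rat.cast_add, add_sub_add_comm]
    exact (PadicInt.subring p).add_mem (norm_sub_padicFrac_le_one x) (norm_sub_padicFrac_le_one y)
  rw [padicChar_eq_exp hden hnorm, padicChar, padicChar, ← Complex.exp_add, Rat.cast_add, mul_add]

/-- The character `χ_p` bundled as an additive character of `ℚ_p`. -/
def padicAddChar (p : ℕ) [Fact p.Prime] : AddChar ℚ_[p] ℂ where
  toFun := padicChar
  map_zero_eq_one' := padicChar_eq_one_iff.2 (by simp)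
  map_add_eq_mul' := padicChar_add

theorem norm_padicChar (x : ℚ_[p]) : ‖padicChar x‖ = 1 := by
  rw [padicChar, show 2 * Real.pi * Complex.I * (padicFrac x : ℂ) =
    ((2 * Real.pi * padicFrac x : ℝ) : ℂ) * Complex.I by push_cast; ring,
    Complex.norm_exp_ofReal_mul_I]

theorem padicChar_sub (x y : ℚ_[p]) :
    padicChar (x - y) = padicChar x * (starRingEnd ℂ) (padicChar y) := by
  rw [← Complex.inv_eq_conj (norm_padicChar y), ← div_eq_mul_inv]
  exact (padicAddChar p).map_sub_eq_div x y

theorem padicChar_natCast_mul (n : ℕ) (x : ℚ_[p]) :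
    padicChar ((n : ℚ_[p]) * x) = padicChar x ^ n := by
  rw [← nsmul_eq_mul]
  exact (padicAddChar p).map_nsmul_eq_pow n x

theorem continuous_padicChar : Continuous (padicChar : ℚ_[p] → ℂ) := by
  refine continuous_iff_continuousAt.2 fun x =>
    (continuousAt_const (y := padicChar x)).congr ?_
  filter_upwards [closedBall_mem_nhds x one_pos] with y hy
  rw [mem_closedBall, dist_eq_norm] at hy
  rw [← add_sub_cancel x y, padicChar_add, padicChar_eq_one_iff.2 hy, mul_one]

theorem sum_padicChar_natCast_mul {y : ℚ_[p]} (hy : ‖(p : ℚ_[p]) * y‖ ≤ 1) :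
    ∑ ν ∈ Finset.range p, padicChar ((ν : ℚ_[p]) * y) = if ‖y‖ ≤ 1 then (p : ℂ) else 0 := by
  simp only [padicChar_natCast_mul]
  split_ifs with h
  · simp [padicChar_eq_one_iff.2 h]
  · rw [geom_sum_eq (mt padicChar_eq_one_iff.1 h), ← padicChar_natCast_mul,
      padicChar_eq_one_iff.2 hy, sub_self, zero_div]

end PadicCharacter

section BallCharacter

/-- The wave packet on the ball of radius `r` around `c`: the character `x ↦ χ_p (ξ x)` of frequency
`ξ`, rescaled to take the value `1` at the centre `c`, and extended by zero outside the ball. -/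
def ballChar (ξ c : ℚ_[p]) (r : ℝ) : ℚ_[p] → ℂ :=
  (closedBall c r).indicator fun x => padicChar (ξ * (x - c))

theorem ballChar_zero (c : ℚ_[p]) (r : ℝ) : ballChar 0 c r = (closedBall c r).indicator 1 := by
  simp only [ballChar, zero_mul, padicChar_eq_one_iff.2 (norm_zero.trans_le zero_le_one)]
  rfl

theorem norm_ballChar_eq_norm_ballChar_zero (ξ c : ℚ_[p]) (r : ℝ) (x : ℚ_[p]) :
    ‖ballChar ξ c r x‖ = ‖ballChar 0 c r x‖ := by
  simp only [ballChar, norm_indicator_eq_indicator_norm, norm_padicChar]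

variable {ξ ξ' c c' h : ℚ_[p]} {r r' : ℝ}

theorem ballChar_sub_center (hh : ‖h‖ ≤ r) (x : ℚ_[p]) :
    ballChar ξ (c - h) r x = padicChar (ξ * h) * ballChar ξ c r x := by
  classical
  have hmem : c - h ∈ closedBall c r := by simpa [dist_eq_norm] using hh
  rw [ballChar, ballChar, ← IsUltrametricDist.closedBall_eq_of_mem hmem, Set.indicator_apply,
    Set.indicator_apply, mul_ite, mul_zero, ← padicChar_add]
  ring_nf

theorem ballChar_add_right (hh : ‖h‖ ≤ r) (x : ℚ_[p]) :
    ballChar ξ c r (x + h) = padicChar (ξ * h) * ballChar ξ c r x := by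
  classical
  have htranslate : ballChar ξ c r (x + h) = ballChar ξ (c - h) r x := by
    simp only [ballChar, Set.indicator_apply, mem_closedBall, dist_eq_norm, sub_sub_eq_add_sub,
      add_sub_right_comm]
  rw [htranslate, ballChar_sub_center hh]

theorem measurable_ballChar : Measurable (ballChar ξ c r) :=
  Measurable.indicator (continuous_padicChar.comp (by fun_prop)).measurable
    measurableSet_closedBall

variable {μ : Measure ℚ_[p]} [IsFiniteMeasureOnCompacts μ]

theorem memLp_ballChar (q : ENNReal) : MemLp (ballChar ξ c r) q μ := by
  have hzero : MemLp (ballChar 0 c r) q μ := ballChar_zero c r ▸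
    memLp_indicator_const q measurableSet_closedBall 1
      (Or.inr (isCompact_closedBall c r).measure_ne_top)
  exact hzero.of_le measurable_ballChar.aestronglyMeasurable
    (ae_of_all _ fun x => (norm_ballChar_eq_norm_ballChar_zero ξ c r x).le)

variable (μ) in
/-- The `L²` class of the wave packet `ballChar ξ c r`. -/
def ballCharLp (ξ c : ℚ_[p]) (r : ℝ) : Lp ℂ 2 μ :=
  (memLp_ballChar (ξ := ξ) (c := c) (r := r) 2).toLp

theorem coeFn_ballCharLp : ballCharLp μ ξ c r =ᵐ[μ] ballChar ξ c r :=
  (memLp_ballChar 2).coeFn_toLp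

theorem ballCharLp_zero : ballCharLp μ 0 c r =
    indicatorConstLp 2 measurableSet_closedBall (isCompact_closedBall c r).measure_ne_top 1 :=
  MemLp.toLp_congr _ _ (ae_of_all _ fun x => congrFun (ballChar_zero c r) x)

theorem norm_ballCharLp : ‖ballCharLp μ ξ c r‖ = √(μ.real (closedBall c r)) := by
  have hnorm : ‖ballCharLp μ ξ c r‖ = ‖ballCharLp μ 0 c r‖ := by
    rw [ballCharLp, ballCharLp, Lp.norm_toLp, Lp.norm_toLp,
      eLpNorm_congr_norm_ae (ae_of_all _ (norm_ballChar_eq_norm_ballChar_zero ξ c r))]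
  rw [hnorm, ballCharLp_zero, norm_indicatorConstLp two_ne_zero ENNReal.ofNat_ne_top,
    norm_one, one_mul, ENNReal.toReal_ofNat, Real.sqrt_eq_rpow]

theorem ballCharLp_sub_center (hh : ‖h‖ ≤ r) :
    ballCharLp μ ξ (c - h) r = padicChar (ξ * h) • ballCharLp μ ξ c r := by
  rw [ballCharLp, ballCharLp, ← MemLp.toLp_const_smul]
  exact MemLp.toLp_congr _ _ (ae_of_all _ (ballChar_sub_center hh))

theorem inner_ballCharLp_zero_left (g : Lp ℂ 2 μ) :
    inner ℂ (ballCharLp μ 0 c r) g = ∫ x in closedBall c r, g x ∂μ := by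
  rw [ballCharLp_zero, L2.inner_indicatorConstLp_one]

theorem inner_ballCharLp_zero_zero (hr : r ≤ r') :
    inner ℂ (ballCharLp μ 0 c r) (ballCharLp μ 0 c r') = (μ.real (closedBall c r) : ℂ) := by
  rw [ballCharLp_zero, ballCharLp_zero, L2.inner_indicatorConstLp_one_indicatorConstLp_one
      (hμs := (isCompact_closedBall c r).measure_ne_top)
      (hμt := (isCompact_closedBall c r').measure_ne_top),
    Set.inter_eq_left.2 (closedBall_subset_closedBall hr)]
  rfl

theorem inner_ballCharLp_eq_zero_of_lt_dist (hr : r < dist c c') :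
    inner ℂ (ballCharLp μ ξ c r) (ballCharLp μ ξ' c' r) = 0 := by
  rw [ballCharLp, ballCharLp, inner_memLp_toLp]
  refine integral_eq_zero_of_ae (ae_of_all _ fun x => ?_)
  by_cases hx : x ∈ closedBall c r
  · have hx' : x ∉ closedBall c' r := fun hx' => hr.not_ge <|
      (IsUltrametricDist.dist_triangle_max c x c').trans (max_le (mem_closedBall'.1 hx) hx')
    simp [ballChar, hx']
  · simp [ballChar, hx]

theorem inner_ballCharLp_eq_zero_of_one_lt_norm_mul [μ.IsAddRightInvariant] (hr : ‖h‖ ≤ r)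
    (hr' : ‖h‖ ≤ r') (hξ : 1 < ‖(ξ' - ξ) * h‖) :
    inner ℂ (ballCharLp μ ξ c r) (ballCharLp μ ξ' c' r') = 0 := by
  rw [ballCharLp, ballCharLp, inner_memLp_toLp]
  refine integral_eq_zero_of_add_right_eq_smul (g := h)
    (mt padicChar_eq_one_iff.1 hξ.not_ge) fun x => ?_
  rw [sub_mul, padicChar_sub, ballChar_add_right hr, ballChar_add_right hr']
  simp only [RCLike.inner_apply, map_mul, smul_eq_mul]
  ring

end BallCharacter

section WaveletFrequency

theorem norm_natCast_sub_natCast_eq_one {m n : ℕ} (hm : m < p) (hn : n < p) (hmn : m ≠ n) :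
    ‖(m - n : ℚ_[p])‖ = 1 := by
  have hint : ‖((m - n : ℤ) : ℚ_[p])‖ = 1 :=
    (Padic.norm_int_le_one _).antisymm <| not_lt.1 fun hlt => hmn <| Eq.symm <|
      (Nat.modEq_iff_dvd.2 (Padic.norm_intCast_lt_one_iff.1 hlt)).eq_of_lt_of_lt hn hm
  exact_mod_cast hint

theorem norm_zpow_neg_mul_le_one_iff {j : ℤ} {x : ℚ_[p]} :
    ‖(p : ℚ_[p]) ^ (-j) * x‖ ≤ 1 ↔ ‖x‖ ≤ (p : ℝ) ^ (-j) := by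
  have hpos : 0 < (p : ℝ) ^ j := zpow_pos (mod_cast (Fact.out : p.Prime).pos) j
  rw [norm_mul, Padic.norm_p_zpow, neg_neg, zpow_neg, ← one_div, le_div_iff₀' hpos]

/-- The frequency `ν p^{-(j+1)}` of the wavelet `x ↦ ψ^{(ν)}(p^{-j}x - a)`. -/
def waveletFreq (p : ℕ) [Fact p.Prime] (j : ℤ) (ν : ℕ) : ℚ_[p] :=
  ν * (p : ℚ_[p]) ^ (-(j + 1))

variable {j j' : ℤ} {ν ν' : ℕ}

theorem waveletFreq_zero : waveletFreq p j 0 = 0 := by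
  rw [waveletFreq, Nat.cast_zero, zero_mul]

theorem norm_waveletFreq (hν : 0 < ν) (hνp : ν < p) : ‖waveletFreq p j ν‖ = (p : ℝ) ^ (j + 1) := by
  have hunit := norm_natCast_sub_natCast_eq_one hνp (Fact.out : p.Prime).pos hν.ne'
  rw [Nat.cast_zero, sub_zero] at hunit
  rw [waveletFreq, norm_mul, hunit, one_mul, Padic.norm_p_zpow, neg_neg]

theorem norm_waveletFreq_sub (hν : 0 < ν) (hνp : ν < p) (hν' : 0 < ν') (hνp' : ν' < p)
    (hne : (j, ν) ≠ (j', ν')) :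
    ‖waveletFreq p j' ν' - waveletFreq p j ν‖ = (p : ℝ) ^ (max j j' + 1) := by
  have hp : (1 : ℝ) < p := mod_cast (Fact.out : p.Prime).one_lt
  rcases eq_or_ne j j' with rfl | hj
  · have hνν' : ν' ≠ ν := fun h => hne (by rw [h])
    rw [waveletFreq, waveletFreq, ← sub_mul, norm_mul,
      norm_natCast_sub_natCast_eq_one hνp' hνp hνν', one_mul, Padic.norm_p_zpow, neg_neg, max_self]
  · have hnorm : ‖waveletFreq p j' ν'‖ ≠ ‖-waveletFreq p j ν‖ := by
      rw [norm_neg, norm_waveletFreq hν hνp, norm_waveletFreq hν' hνp']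
      exact (zpow_right_injective₀ (by linarith) hp.ne').ne (by lia)
    rw [sub_eq_add_neg, Padic.add_eq_max_of_ne hnorm, norm_neg, norm_waveletFreq hν hνp,
      norm_waveletFreq hν' hνp', max_comm, ← (zpow_right_strictMono₀ hp).monotone.map_max,
      max_add_add_right]

theorem sum_ballChar_waveletFreq (j : ℤ) (c x : ℚ_[p]) :
    ∑ ν ∈ Finset.range p, ballChar (waveletFreq p j ν) c ((p : ℝ) ^ (-j)) x =
      p * ballChar 0 c ((p : ℝ) ^ (-(j + 1))) x := by
  classical
  have hp : (p : ℚ_[p]) ≠ 0 := mod_cast (Fact.out : p.Prime).ne_zero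
  set y := (p : ℚ_[p]) ^ (-(j + 1)) * (x - c) with hy
  have hmem : x ∈ closedBall c ((p : ℝ) ^ (-j)) ↔ ‖(p : ℚ_[p]) * y‖ ≤ 1 := by
    rw [hy, ← mul_assoc, ← zpow_one_add₀ hp, show 1 + -(j + 1) = -j by ring,
      norm_zpow_neg_mul_le_one_iff, mem_closedBall, dist_eq_norm]
  have hmem_succ : x ∈ closedBall c ((p : ℝ) ^ (-(j + 1))) ↔ ‖y‖ ≤ 1 := by
    rw [hy, norm_zpow_neg_mul_le_one_iff, mem_closedBall, dist_eq_norm]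
  rw [ballChar_zero]
  simp only [ballChar, waveletFreq, mul_assoc, ← hy, Set.indicator_apply, hmem, hmem_succ,
    Pi.one_apply, mul_ite, mul_one, mul_zero]
  by_cases hpy : ‖(p : ℚ_[p]) * y‖ ≤ 1
  · simp only [hpy, if_true, sum_padicChar_natCast_mul hpy]
  · have hyp : ¬‖y‖ ≤ 1 := fun h => hpy ((PadicInt.subring p).mul_mem (natCast_mem _ p) h)
    simp only [hpy, hyp, if_false, Finset.sum_const_zero]

section Lp

variable {μ : Measure ℚ_[p]} [IsFiniteMeasureOnCompacts μ]

theorem sum_ballCharLp_waveletFreq (j : ℤ) (c : ℚ_[p]) :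
    ∑ ν ∈ Finset.range p, ballCharLp μ (waveletFreq p j ν) c ((p : ℝ) ^ (-j)) =
      (p : ℂ) • ballCharLp μ 0 c ((p : ℝ) ^ (-(j + 1))) := by
  refine Lp.ext ?_
  grw [Lp.coeFn_finsetSum, Lp.coeFn_smul]
  have hcoe : ∀ᵐ x ∂μ, ∀ ν, ballCharLp μ (waveletFreq p j ν) c ((p : ℝ) ^ (-j)) x =
      ballChar (waveletFreq p j ν) c ((p : ℝ) ^ (-j)) x :=
    ae_all_iff.2 fun ν => coeFn_ballCharLp
  filter_upwards [hcoe, coeFn_ballCharLp (μ := μ) (ξ := 0) (c := c)] with x hx hx_succ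
  rw [Finset.sum_apply, Pi.smul_apply, hx_succ, smul_eq_mul, ← sum_ballChar_waveletFreq]
  exact Finset.sum_congr rfl fun ν _ => hx ν

theorem inner_ballCharLp_zero_eq_mul_succ {g : Lp ℂ 2 μ} {c : ℚ_[p]}
    (hg : ∀ ν, 0 < ν → ν < p →
      inner ℂ (ballCharLp μ (waveletFreq p j ν) c ((p : ℝ) ^ (-j))) g = 0) :
    inner ℂ (ballCharLp μ 0 c ((p : ℝ) ^ (-j))) g =
      p * inner ℂ (ballCharLp μ 0 c ((p : ℝ) ^ (-(j + 1)))) g := by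
  have hsum := congrArg (inner ℂ · g) (sum_ballCharLp_waveletFreq (μ := μ) j c)
  simp only [sum_inner, inner_smul_left, Complex.conj_natCast] at hsum
  rw [← hsum, Finset.sum_eq_single_of_mem 0 (Finset.mem_range.2 (Fact.out : p.Prime).pos),
    waveletFreq_zero]
  exact fun ν hν h0 => hg ν (Nat.pos_of_ne_zero h0) (Finset.mem_range.1 hν)

theorem inner_ballCharLp_waveletFreq_zero [μ.IsAddRightInvariant] (c : ℚ_[p]) (hν : 0 < ν)
    (hνp : ν < p) : inner ℂ (ballCharLp μ (waveletFreq p j ν) c ((p : ℝ) ^ (-j)))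
      (ballCharLp μ 0 c ((p : ℝ) ^ (-j))) = 0 := by
  have hp : (1 : ℝ) < p := mod_cast (Fact.out : p.Prime).one_lt
  have hnorm : ‖(p : ℚ_[p]) ^ j‖ = (p : ℝ) ^ (-j) := Padic.norm_p_zpow j
  refine inner_ballCharLp_eq_zero_of_one_lt_norm_mul hnorm.le hnorm.le ?_
  rwa [zero_sub, norm_mul, norm_neg, norm_waveletFreq hν hνp, hnorm, ← zpow_add₀ (by linarith),
    show j + 1 + -j = 1 by ring, zpow_one]

end Lp

variable {μ : Measure ℚ_[p]} [μ.IsAddHaarMeasure]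

theorem measureReal_closedBall_zpow (hμ : μ (closedBall 0 1) = 1) (j : ℤ) (c : ℚ_[p]) :
    μ.real (closedBall c ((p : ℝ) ^ (-j))) = (p : ℝ) ^ (-j) := by
  have hp : (1 : ℝ) < p := mod_cast (Fact.out : p.Prime).one_lt
  have hstep : ∀ j : ℤ, μ.real (closedBall c ((p : ℝ) ^ (-j))) =
      p * μ.real (closedBall c ((p : ℝ) ^ (-(j + 1)))) := by
    intro j
    have hinner := inner_ballCharLp_zero_eq_mul_succ (μ := μ) fun ν hν hνp =>
      inner_ballCharLp_waveletFreq_zero (j := j) c hν hνp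
    rw [inner_ballCharLp_zero_zero le_rfl,
      inner_ballCharLp_zero_zero (zpow_le_zpow_right₀ hp.le (by lia))] at hinner
    exact_mod_cast hinner
  rw [eq_zpow_neg_mul_of_forall_eq_mul_succ (by linarith) hstep, neg_zero, zpow_zero,
    measureReal_def, Measure.addHaar_closedBall_center, hμ, ENNReal.toReal_one, mul_one]

theorem setIntegral_closedBall_eq_zero_of_forall_inner_eq_zero (hμ : μ (closedBall 0 1) = 1)
    {g : Lp ℂ 2 μ} (hg : ∀ j c ν, 0 < ν → ν < p →
      inner ℂ (ballCharLp μ (waveletFreq p j ν) c ((p : ℝ) ^ (-j))) g = 0) (j : ℤ) (c : ℚ_[p]) :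
    ∫ x in closedBall c ((p : ℝ) ^ (-j)), g x ∂μ = 0 := by
  have hp : (1 : ℝ) < p := mod_cast (Fact.out : p.Prime).one_lt
  set I : ℤ → ℂ := fun j => inner ℂ (ballCharLp μ 0 c ((p : ℝ) ^ (-j))) g
  have hI : ∀ j, I j = (p : ℂ) ^ (-j) * I 0 :=
    eq_zpow_neg_mul_of_forall_eq_mul_succ (mod_cast (Fact.out : p.Prime).ne_zero) fun j =>
      inner_ballCharLp_zero_eq_mul_succ (hg j c)
  have hbound : ∀ n : ℕ, (p : ℝ) ^ n * ‖I 0‖ ^ 2 ≤ ‖g‖ ^ 2 := by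
    intro n
    have hpn : 0 < (p : ℝ) ^ n := by positivity
    have hcs : ‖I (-n)‖ ^ 2 ≤ (p : ℝ) ^ n * ‖g‖ ^ 2 := by
      calc ‖I (-n)‖ ^ 2
          ≤ (‖ballCharLp μ 0 c ((p : ℝ) ^ (-(-(n : ℤ))))‖ * ‖g‖) ^ 2 := by
            gcongr; exact norm_inner_le_norm _ _
        _ = (p : ℝ) ^ n * ‖g‖ ^ 2 := by
            rw [mul_pow, norm_ballCharLp, Real.sq_sqrt measureReal_nonneg,
              measureReal_closedBall_zpow hμ, neg_neg, zpow_natCast]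
    rw [hI, norm_mul, neg_neg, zpow_natCast, norm_pow, Complex.norm_natCast] at hcs
    refine le_of_mul_le_mul_left (hcs.trans_eq' ?_) hpn
    ring
  have hI0 : I 0 = 0 := by
    by_contra hne
    obtain ⟨n, hn⟩ := pow_unbounded_of_one_lt (‖g‖ ^ 2 / ‖I 0‖ ^ 2) hp
    exact (hbound n).not_gt ((div_lt_iff₀ (by positivity)).1 hn)
  rw [← inner_ballCharLp_zero_left]
  exact (hI j).trans (by rw [hI0, mul_zero])

end WaveletFrequency

theorem ae_eq_zero_of_forall_setIntegral_closedBall_eq_zero {E : Type*} [NormedAddCommGroup E]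
    [NormedSpace ℝ E] [CompleteSpace E] {μ : Measure ℚ_[p]} {f : ℚ_[p] → E}
    (hf : LocallyIntegrable f μ)
    (hzero : ∀ (j : ℤ) c, ∫ x in closedBall c ((p : ℝ) ^ (-j)), f x ∂μ = 0) : f =ᵐ[μ] 0 := by
  have hp : (1 : ℝ) < p := mod_cast (Fact.out : p.Prime).one_lt
  set R : Set ℝ := Set.range fun j : ℤ => (p : ℝ) ^ (-j)
  set S : Set (Set ℚ_[p]) := Set.range fun n : ℕ => closedBall 0 ((p : ℝ) ^ (-(-n : ℤ)))
  have hgen : borel ℚ_[p] = MeasurableSpace.generateFrom (Set.image2 closedBall Set.univ R) := by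
    refine borel_eq_generateFrom_closedBall ?_ fun ε hε => ?_
    · rintro _ ⟨j, rfl⟩
      positivity
    · obtain ⟨n, hn⟩ := exists_pow_lt_of_lt_one hε (inv_lt_one_of_one_lt₀ hp)
      exact ⟨_, ⟨n, rfl⟩, by simpa using hn⟩
  have hcover : ⋃₀ S = Set.univ := by
    refine Set.eq_univ_of_forall fun x => ?_
    obtain ⟨n, hn⟩ := pow_unbounded_of_one_lt ‖x‖ hp
    refine ⟨_, ⟨n, rfl⟩, ?_⟩
    rw [mem_closedBall, dist_zero_right, neg_neg, zpow_natCast]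
    exact hn.le
  refine ae_eq_zero_of_setIntegral_eq_zero_of_isPiSystem hgen isPiSystem_image2_closedBall
    (S := S) ?_ (Set.countable_range _) hcover ?_ ?_
  · rintro _ ⟨n, rfl⟩
    exact ⟨0, trivial, _, ⟨-n, rfl⟩, rfl⟩
  · rintro _ ⟨n, rfl⟩
    exact hf.integrableOn_isCompact (isCompact_closedBall _ _)
  · rintro _ ⟨c, -, _, ⟨j, rfl⟩, rfl⟩
    exact hzero j c

section KozyrevWavelet

theorem rpow_half_mul_sqrt_zpow_neg {a : ℝ} (ha : 0 < a) (j : ℤ) :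
    a ^ ((j : ℝ) / 2) * √(a ^ (-j)) = 1 := by
  rw [Real.sqrt_eq_rpow, ← Real.rpow_intCast, ← Real.rpow_mul ha.le, ← Real.rpow_add ha,
    show (j : ℝ) / 2 + ((-j : ℤ) : ℝ) * (1 / 2) = 0 by push_cast; ring, Real.rpow_zero]

/-- The index set of the wavelets: scale `j`, translation `a`, and frequency index `ν`. -/
abbrev KozyrevIndex (p : ℕ) [Fact p.Prime] : Type :=
  ℤ × Ip p × {ν : ℕ // 1 ≤ ν ∧ ν ≤ p - 1}

/-- The wavelet `x ↦ p^{j/2} ψ^{(ν)}(p^{-j}x - a)` as an element of `L²`: the wave packet of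
frequency `ν p^{-(j+1)}` on the ball of radius `p^{-j}` around `p^j a`, multiplied by `p^{j/2}`. -/
def kozyrevWavelet (μ : Measure ℚ_[p]) [IsFiniteMeasureOnCompacts μ] (i : KozyrevIndex p) :
    Lp ℂ 2 μ :=
  (((p : ℝ) ^ ((i.1 : ℝ) / 2) : ℝ) : ℂ) •
    ballCharLp μ (waveletFreq p i.1 i.2.2) ((p : ℚ_[p]) ^ i.1 * i.2.1) ((p : ℝ) ^ (-i.1))

theorem ballChar_waveletFreq_eq_mul_Omega (j : ℤ) (ν : ℕ) (a x : ℚ_[p]) :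
    ballChar (waveletFreq p j ν) ((p : ℚ_[p]) ^ j * a) ((p : ℝ) ^ (-j)) x =
      padicChar ((ν : ℚ_[p]) / (p : ℚ_[p]) * ((p : ℚ_[p]) ^ (-j) * x - a)) *
        (Omega ‖(p : ℚ_[p]) ^ (-j) * x - a‖ : ℝ) := by
  classical
  have hp : (p : ℚ_[p]) ≠ 0 := mod_cast (Fact.out : p.Prime).ne_zero
  have hscale : (p : ℚ_[p]) ^ (-j) * x - a = (p : ℚ_[p]) ^ (-j) * (x - (p : ℚ_[p]) ^ j * a) := by
    rw [mul_sub, zpow_neg, inv_mul_cancel_left₀ (zpow_ne_zero j hp)]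
  have hfreq : (ν : ℚ_[p]) / (p : ℚ_[p]) * (p : ℚ_[p]) ^ (-j) = waveletFreq p j ν := by
    rw [waveletFreq, neg_add, zpow_add₀ hp, zpow_neg_one]
    ring
  have hmem : ‖(p : ℚ_[p]) ^ (-j) * x - a‖ ∈ Set.Icc 0 1 ↔
      x ∈ closedBall ((p : ℚ_[p]) ^ j * a) ((p : ℝ) ^ (-j)) := by
    rw [hscale, Set.mem_Icc, and_iff_right (norm_nonneg _), norm_zpow_neg_mul_le_one_iff,
      mem_closedBall, dist_eq_norm]
  rw [ballChar, Omega, Set.indicator_apply, Set.indicator_apply, if_congr hmem rfl rfl, hscale,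
    ← mul_assoc, hfreq]
  split_ifs
  · rw [Complex.ofReal_one, mul_one]
  · rw [Complex.ofReal_zero, mul_zero]

section FiniteOnCompacts

variable {μ : Measure ℚ_[p]} [IsFiniteMeasureOnCompacts μ]

theorem coeFn_kozyrevWavelet (j : ℤ) (a : Ip p) (ν : {ν : ℕ // 1 ≤ ν ∧ ν ≤ p - 1}) :
    kozyrevWavelet μ (j, a, ν) =ᵐ[μ] fun x => (((p : ℝ) ^ ((j : ℝ) / 2) : ℝ) : ℂ) *
      (padicChar ((ν : ℚ_[p]) / (p : ℚ_[p]) * ((p : ℚ_[p]) ^ (-j) * x - (a : ℚ_[p]))) *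
        (Omega ‖(p : ℚ_[p]) ^ (-j) * x - (a : ℚ_[p])‖ : ℝ)) := by
  grw [kozyrevWavelet, Lp.coeFn_smul]
  filter_upwards [coeFn_ballCharLp (μ := μ) (ξ := waveletFreq p j ν)
    (c := (p : ℚ_[p]) ^ j * a) (r := (p : ℝ) ^ (-j))] with x hx
  rw [Pi.smul_apply, hx, smul_eq_mul, ballChar_waveletFreq_eq_mul_Omega]

theorem inner_kozyrevWavelet_eq_zero [μ.IsAddRightInvariant] {i i' : KozyrevIndex p}
    (hne : i ≠ i') : inner ℂ (kozyrevWavelet μ i) (kozyrevWavelet μ i') = 0 := by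
  have hp : (1 : ℝ) < p := mod_cast (Fact.out : p.Prime).one_lt
  obtain ⟨j, a, ν, hν, hνp⟩ := i
  obtain ⟨j', a', ν', hν', hνp'⟩ := i'
  simp only [kozyrevWavelet, inner_smul_left, inner_smul_right]
  suffices inner ℂ (ballCharLp μ (waveletFreq p j ν) ((p : ℚ_[p]) ^ j * a) ((p : ℝ) ^ (-j)))
      (ballCharLp μ (waveletFreq p j' ν') ((p : ℚ_[p]) ^ j' * a') ((p : ℝ) ^ (-j'))) = 0 by
    rw [this, mul_zero, mul_zero]
  by_cases hfreq : (j, ν) = (j', ν')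
  · obtain ⟨rfl, rfl⟩ := Prod.mk.inj hfreq
    have haa' : (a : ℚ_[p]) ≠ a' := fun h => hne (by rw [Subtype.ext h])
    have hlt : 1 < ‖(a - a' : ℚ_[p])‖ :=
      not_le.1 fun h => haa' (eq_of_mem_Ip_of_norm_sub_le_one a.2 a'.2 h)
    refine inner_ballCharLp_eq_zero_of_lt_dist ?_
    rw [dist_eq_norm, ← mul_sub, norm_mul, Padic.norm_p_zpow]
    exact lt_mul_of_one_lt_right (by positivity) hlt
  · have hnorm : ‖(p : ℚ_[p]) ^ max j j'‖ = (p : ℝ) ^ (-max j j') := Padic.norm_p_zpow _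
    refine inner_ballCharLp_eq_zero_of_one_lt_norm_mul (h := (p : ℚ_[p]) ^ max j j') ?_ ?_ ?_
    · exact hnorm.trans_le (zpow_le_zpow_right₀ hp.le (neg_le_neg (le_max_left j j')))
    · exact hnorm.trans_le (zpow_le_zpow_right₀ hp.le (neg_le_neg (le_max_right j j')))
    · rwa [norm_mul, norm_waveletFreq_sub hν (by lia) hν' (by lia) hfreq, hnorm,
        ← zpow_add₀ (by linarith), show max j j' + 1 + -max j j' = 1 by ring, zpow_one]

-- The ball of radius `p^{-j}` around `c` is also the ball around `p^j a`, where `a` is the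
-- fractional part of `p^{-j} c`.
theorem inner_ballCharLp_eq_zero_of_forall_inner_kozyrevWavelet {g : Lp ℂ 2 μ}
    (hg : ∀ i, inner ℂ (kozyrevWavelet μ i) g = 0) (j : ℤ) (c : ℚ_[p]) (ν : ℕ) (hν : 0 < ν)
    (hνp : ν < p) : inner ℂ (ballCharLp μ (waveletFreq p j ν) c ((p : ℝ) ^ (-j))) g = 0 := by
  have hp : (p : ℚ_[p]) ≠ 0 := mod_cast (Fact.out : p.Prime).ne_zero
  set a := (padicFrac ((p : ℚ_[p]) ^ (-j) * c) : ℚ_[p])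
  have hwavelet := hg (j, ⟨a, padicFrac_mem_Ip _⟩, ⟨ν, hν, by lia⟩)
  have hcentre : ‖(p : ℚ_[p]) ^ j * a - c‖ ≤ (p : ℝ) ^ (-j) := by
    rw [← norm_zpow_neg_mul_le_one_iff, mul_sub, zpow_neg, inv_mul_cancel_left₀ (zpow_ne_zero j hp),
      ← zpow_neg, norm_sub_rev]
    exact norm_sub_padicFrac_le_one _
  have hcoeff : (((p : ℝ) ^ ((j : ℝ) / 2) : ℝ) : ℂ) ≠ 0 :=
    mod_cast (Real.rpow_pos_of_pos (mod_cast (Fact.out : p.Prime).pos) _).ne'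
  rw [kozyrevWavelet, inner_smul_left, Complex.conj_ofReal] at hwavelet
  rw [← sub_sub_cancel ((p : ℚ_[p]) ^ j * a) c, ballCharLp_sub_center hcentre, inner_smul_left,
    (mul_eq_zero.1 hwavelet).resolve_left hcoeff, mul_zero]

end FiniteOnCompacts

variable {μ : Measure ℚ_[p]} [μ.IsAddHaarMeasure]

theorem norm_kozyrevWavelet (hμ : μ (closedBall 0 1) = 1) (i : KozyrevIndex p) :
    ‖kozyrevWavelet μ i‖ = 1 := by
  have hp : (0 : ℝ) < p := mod_cast (Fact.out : p.Prime).pos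
  rw [kozyrevWavelet, norm_smul, Complex.norm_real, Real.norm_of_nonneg (by positivity),
    norm_ballCharLp, measureReal_closedBall_zpow hμ, rpow_half_mul_sqrt_zpow_neg hp]

theorem orthonormal_kozyrevWavelet (hμ : μ (closedBall 0 1) = 1) :
    Orthonormal ℂ (kozyrevWavelet μ) :=
  ⟨norm_kozyrevWavelet hμ, fun _ _ => inner_kozyrevWavelet_eq_zero⟩

theorem topologicalClosure_span_range_kozyrevWavelet (hμ : μ (closedBall 0 1) = 1) :
    (Submodule.span ℂ (Set.range (kozyrevWavelet μ))).topologicalClosure = ⊤ := by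
  rw [Submodule.topologicalClosure_eq_top_iff, Submodule.eq_bot_iff]
  intro g hg
  have hinner : ∀ i, inner ℂ (kozyrevWavelet μ i) g = 0 := fun i =>
    (Submodule.mem_orthogonal _ _).1 hg _ (Submodule.subset_span ⟨i, rfl⟩)
  rw [Lp.eq_zero_iff_ae_eq_zero]
  exact ae_eq_zero_of_forall_setIntegral_closedBall_eq_zero
    ((Lp.memLp g).locallyIntegrable one_le_two)
    (setIntegral_closedBall_eq_zero_of_forall_inner_eq_zero hμ
      (inner_ballCharLp_eq_zero_of_forall_inner_kozyrevWavelet hinner))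

end KozyrevWavelet

/-- Kozyrev's wavelet basis: for `ν = 1,…,p−1` let
`ψ^{(ν)}(x) = χ_p((ν/p)x) Ω(|x|_p)`. Then the system
`{p^{j/2} ψ^{(ν)}(p^{−j}x − a) : j ∈ ℤ, a ∈ I_p, ν = 1,…,p−1}` is an orthonormal basis
of `L²(ℚ_p)` (`μ` the normalized Haar measure). -/
theorem padic_kozyrev_wavelet_basis
    (μ : Measure ℚ_[p]) [μ.IsAddHaarMeasure] (hμ : μ (closedBall 0 1) = 1) :
    ∃ E : ℤ × (Ip p) × {ν : ℕ // 1 ≤ ν ∧ ν ≤ p - 1} → Lp ℂ 2 μ,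
      (∀ (j : ℤ) (a : (Ip p)) (ν : {ν : ℕ // 1 ≤ ν ∧ ν ≤ p - 1}),
        ↑↑(E (j, a, ν)) =ᵐ[μ] fun x =>
          (((p : ℝ) ^ ((j : ℝ) / 2) : ℝ) : ℂ) *
            (padicChar (((ν : ℚ_[p]) / (p : ℚ_[p])) * ((p : ℚ_[p]) ^ (-j) * x - (a : ℚ_[p]))) *
              ((Omega ‖(p : ℚ_[p]) ^ (-j) * x - (a : ℚ_[p])‖ : ℝ) : ℂ))) ∧
        Orthonormal ℂ E ∧
        (Submodule.span ℂ (Set.range E)).topologicalClosure = ⊤ := by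
  exact ⟨kozyrevWavelet μ, coeFn_kozyrevWavelet, orthonormal_kozyrevWavelet hμ,
    topologicalClosure_span_range_kozyrevWavelet hμ⟩

end
end

section
/- (A 3-adic wavelet basis.) Define ψ^{(1)}, ψ^{(2)} : ℚ_3 → ℂ by: ψ^{(1)}(x) = −√(3/2) if |x|_3 ≤ 1/3, ψ^{(1)}(x) = √(3/2) if |x−1|_3 ≤ 1/3, ψ^{(1)}(x) = 0 if |x−2|_3 ≤ 1/3, and ψ^{(1)}(x) = 0 if |x|_3 ≥ 3; ψ^{(2)}(x) = −1/√2 if |x|_3 ≤ 1/3, ψ^{(2)}(x) = −1/√2 if |x−1|_3 ≤ 1/3, ψ^{(2)}(x) = √2 if |x−2|_3 ≤ 1/3, and ψ^{(2)}(x) = 0 if |x|_3 ≥ 3. Then the system {3^{j/2} ψ^{(ν)}(3^{−j}x − a) : j ∈ ℤ, a ∈ I_3, ν ∈ {1,2}} is an orthonormal basis of L²(ℚ_3). -/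
open MeasureTheory Metric
open scoped Classical

noncomputable section

instance fact_prime_three : Fact (Nat.Prime 3) := ⟨by norm_num⟩

/-- `I_3`: the set of `3`-adic fractional parts, i.e. numbers `a / 3^γ` with
`0 ≤ a < 3^γ` (in particular `0 ∈ I_3`). -/
def I3 : Set ℚ_[3] :=
  {x | ∃ γ a : ℕ, a < 3 ^ γ ∧ x = (a : ℚ_[3]) / (3 : ℚ_[3]) ^ γ}

instance : MeasurableSpace ℚ_[3] := borel _
instance : BorelSpace ℚ_[3] := ⟨rfl⟩

/-- The wavelet function `ψ^{(1)}`: equal to `−√(3/2)` on `{|x|_3 ≤ 1/3}`, to `√(3/2)` on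
`{|x−1|_3 ≤ 1/3}`, to `0` on `{|x−2|_3 ≤ 1/3}`, and to `0` on `{|x|_3 ≥ 3}`. -/
def psi1 : ℚ_[3] → ℂ := fun x =>
  if ‖x‖ ≤ 1 / 3 then -((Real.sqrt (3 / 2) : ℝ) : ℂ)
  else if ‖x - 1‖ ≤ 1 / 3 then ((Real.sqrt (3 / 2) : ℝ) : ℂ)
  else if ‖x - 2‖ ≤ 1 / 3 then 0
  else 0

/-- The wavelet function `ψ^{(2)}`: equal to `−1/√2` on `{|x|_3 ≤ 1/3}`, to `−1/√2` on
`{|x−1|_3 ≤ 1/3}`, to `√2` on `{|x−2|_3 ≤ 1/3}`, and to `0` on `{|x|_3 ≥ 3}`. -/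
def psi2 : ℚ_[3] → ℂ := fun x =>
  if ‖x‖ ≤ 1 / 3 then -(((Real.sqrt 2)⁻¹ : ℝ) : ℂ)
  else if ‖x - 1‖ ≤ 1 / 3 then -(((Real.sqrt 2)⁻¹ : ℝ) : ℂ)
  else if ‖x - 2‖ ≤ 1 / 3 then ((Real.sqrt 2 : ℝ) : ℂ)
  else 0

/-- The pair `(ψ^{(1)}, ψ^{(2)})` indexed by `Fin 2`. -/
def psi : Fin 2 → ℚ_[3] → ℂ := ![psi1, psi2]

/-!
Two balls of an ultrametric space are nested or disjoint. At distinct scales, the finer of two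
wavelets therefore lives on a set where the coarser one is constant, and its mean is zero; at the
same scale, orthonormality is that of the vectors of values on the sub-balls.

These vectors span the orthogonal complement of the constants, so a function `f` orthogonal to every
wavelet has equal integrals over all sub-balls of a given ball. Hence the integral of `f` is
multiplied by the number `q` of sub-balls whenever a ball is enlarged by one scale, whereas by
Cauchy-Schwarz it grows at most like `√q` per scale. All ball integrals of `f` thus vanish, and
balls form a generating π-system, so `f = 0`.
-/

section PiSystem

variable {X E : Type*} [MeasurableSpace X] {μ : Measure X} [NormedAddCommGroup E]
  [NormedSpace ℝ E] {f : X → E} {C : Set (Set X)}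

lemma setIntegral_inter_eq_zero_of_isPiSystem
    (hgen : ‹MeasurableSpace X› = MeasurableSpace.generateFrom C) (hC : IsPiSystem C)
    (h0 : ∀ s ∈ C, ∫ x in s, f x ∂μ = 0) {B : Set X} (hB : B ∈ C) (hf : IntegrableOn f B μ)
    {s : Set X} (hs : MeasurableSet s) : ∫ x in s ∩ B, f x ∂μ = 0 := by
  have hBm : MeasurableSet B := hgen ▸ MeasurableSpace.measurableSet_generateFrom hB
  induction s, hs using MeasurableSpace.induction_on_inter hgen hC with
  | empty => simp
  | basic t ht =>
    rcases (t ∩ B).eq_empty_or_nonempty with h | h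
    · simp [h]
    · exact h0 _ (hC _ ht _ hB h)
  | compl t ht ih =>
    have hsplit := integral_inter_add_sdiff ht hf
    rwa [Set.inter_comm, ih, zero_add, h0 B hB, Set.sdiff_eq, Set.inter_comm] at hsplit
  | iUnion g hdisj hg ih =>
    rw [Set.iUnion_inter, integral_iUnion (fun i => (hg i).inter hBm)
      (fun i k hik => (hdisj hik).mono Set.inter_subset_left Set.inter_subset_left)
      (hf.mono_set (Set.iUnion_subset fun i => Set.inter_subset_right))]
    simp [ih]

lemma ae_eq_zero_of_forall_setIntegral_eq_zero_of_isPiSystem [CompleteSpace E]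
    (hgen : ‹MeasurableSpace X› = MeasurableSpace.generateFrom C) (hC : IsPiSystem C)
    (hspan : IsCountablySpanning C) (hf : ∀ s ∈ C, IntegrableOn f s μ)
    (h0 : ∀ s ∈ C, ∫ x in s, f x ∂μ = 0) : f =ᵐ[μ] 0 := by
  obtain ⟨B, hB, hcover⟩ := hspan
  rw [← Measure.restrict_univ (μ := μ), ← hcover, ae_eq_restrict_iUnion_iff]
  intro n
  refine Integrable.ae_eq_zero_of_forall_setIntegral_eq_zero (hf _ (hB n)) fun s hs _ => ?_
  rw [Measure.restrict_restrict hs]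
  exact setIntegral_inter_eq_zero_of_isPiSystem hgen hC h0 (hB n) (hf _ (hB n)) hs

end PiSystem

lemma isCountablySpanning_closedBall {X : Type*} [PseudoMetricSpace X] [Nonempty X] {R : Set ℝ}
    (hlarge : ∀ C, ∃ r ∈ R, C ≤ r) :
    IsCountablySpanning {s : Set X | ∃ c, ∃ r ∈ R, s = closedBall c r} := by
  obtain ⟨x⟩ := ‹Nonempty X›
  choose r hr hle using hlarge
  refine ⟨fun n : ℕ => closedBall x (r n), fun n => ⟨x, r n, hr n, rfl⟩, ?_⟩
  refine Set.eq_univ_of_forall fun y => Set.mem_iUnion.2 ?_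
  obtain ⟨n, hn⟩ := exists_nat_ge (dist y x)
  exact ⟨n, hn.trans (hle n)⟩

section Ultrametric

variable {X : Type*} [PseudoMetricSpace X] [IsUltrametricDist X]

lemma isPiSystem_closedBall (R : Set ℝ) :
    IsPiSystem {s : Set X | ∃ c, ∃ r ∈ R, s = closedBall c r} := by
  rintro _ ⟨c, r, hr, rfl⟩ _ ⟨c', r', hr', rfl⟩ hne
  rcases IsUltrametricDist.closedBall_subset_trichotomy (x := c) (y := c') (r := r) (s := r')
    with h | h | h
  · exact ⟨c, r, hr, Set.inter_eq_left.2 h⟩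
  · exact ⟨c', r', hr', Set.inter_eq_right.2 h⟩
  · exact absurd hne (Set.not_nonempty_iff_eq_empty.2 h.inter_eq)

lemma isTopologicalBasis_closedBall {R : Set ℝ} (hpos : ∀ r ∈ R, 0 < r)
    (hsmall : ∀ ε > 0, ∃ r ∈ R, r ≤ ε) :
    TopologicalSpace.IsTopologicalBasis {s : Set X | ∃ c, ∃ r ∈ R, s = closedBall c r} := by
  refine TopologicalSpace.isTopologicalBasis_of_isOpen_of_nhds ?_ fun x u hx hu => ?_
  · rintro _ ⟨c, r, hr, rfl⟩
    exact IsUltrametricDist.isOpen_closedBall c (hpos r hr).ne'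
  · obtain ⟨ε, hε, hεu⟩ := nhds_basis_closedBall.mem_iff.1 (hu.mem_nhds hx)
    obtain ⟨r, hr, hrε⟩ := hsmall ε hε
    exact ⟨_, ⟨x, r, hr, rfl⟩, mem_closedBall_self (hpos r hr).le,
      (closedBall_subset_closedBall hrε).trans hεu⟩

lemma ae_eq_zero_of_forall_setIntegral_closedBall_eq_zero_s19 [SecondCountableTopology X]
    [MeasurableSpace X] [BorelSpace X] {μ : Measure X} {E : Type*} [NormedAddCommGroup E]
    [NormedSpace ℝ E] [CompleteSpace E] {f : X → E} {R : Set ℝ} (hpos : ∀ r ∈ R, 0 < r)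
    (hsmall : ∀ ε > 0, ∃ r ∈ R, r ≤ ε) (hlarge : ∀ C, ∃ r ∈ R, C ≤ r)
    (hf : ∀ c, ∀ r ∈ R, IntegrableOn f (closedBall c r) μ)
    (h0 : ∀ c, ∀ r ∈ R, ∫ x in closedBall c r, f x ∂μ = 0) : f =ᵐ[μ] 0 := by
  cases isEmpty_or_nonempty X
  · exact Filter.Eventually.of_forall isEmptyElim
  refine ae_eq_zero_of_forall_setIntegral_eq_zero_of_isPiSystem ?_ (isPiSystem_closedBall R)
    (isCountablySpanning_closedBall hlarge) ?_ ?_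
  · rw [BorelSpace.measurable_eq (α := X),
      (isTopologicalBasis_closedBall hpos hsmall).borel_eq_generateFrom]
  · rintro _ ⟨c, r, hr, rfl⟩
    exact hf c r hr
  · rintro _ ⟨c, r, hr, rfl⟩
    exact h0 c r hr

end Ultrametric

lemma norm_setIntegral_sq_le {X : Type*} [MeasurableSpace X] {μ : Measure X} {𝕜 : Type*}
    [RCLike 𝕜] {s : Set X} (hs : MeasurableSet s) (hμs : μ s ≠ ⊤) (f : Lp 𝕜 2 μ) :
    ‖∫ x in s, f x ∂μ‖ ^ 2 ≤ μ.real s * ‖f‖ ^ 2 := by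
  have hnorm : ‖indicatorConstLp 2 hs hμs (1 : 𝕜)‖ ^ 2 = μ.real s := by
    rw [norm_indicatorConstLp two_ne_zero ENNReal.ofNat_ne_top, norm_one, one_mul,
      ENNReal.toReal_ofNat, ← Real.sqrt_eq_rpow, Real.sq_sqrt measureReal_nonneg]
  rw [← L2.inner_indicatorConstLp_one hs hμs, ← hnorm, ← mul_pow]
  gcongr
  exact norm_inner_le_norm _ _

section BallIndicator

variable {X : Type*} [PseudoMetricSpace X] [ProperSpace X] [MeasurableSpace X]
  [OpensMeasurableSpace X] (𝕜 : Type*) [RCLike 𝕜] (μ : Measure X) [IsFiniteMeasureOnCompacts μ]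

/-- The indicator function of the closed ball `closedBall c r`, as an element of `L²`. -/
def ballIndicatorLp (c : X) (r : ℝ) : Lp 𝕜 2 μ :=
  indicatorConstLp 2 (measurableSet_closedBall (x := c) (ε := r)) measure_closedBall_lt_top.ne 1

variable {𝕜 μ}

lemma inner_ballIndicatorLp (c : X) (r : ℝ) (f : Lp 𝕜 2 μ) :
    inner 𝕜 (ballIndicatorLp 𝕜 μ c r) f = ∫ x in closedBall c r, f x ∂μ :=
  L2.inner_indicatorConstLp_one _ _ f

lemma inner_ballIndicatorLp_of_subset {c c' : X} {r r' : ℝ}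
    (h : closedBall c' r' ⊆ closedBall c r) :
    inner 𝕜 (ballIndicatorLp 𝕜 μ c r) (ballIndicatorLp 𝕜 μ c' r') =
      (μ.real (closedBall c' r') : 𝕜) :=
  (L2.inner_indicatorConstLp_one_indicatorConstLp_one _ _ _ _).trans <| by
    rw [Set.inter_eq_self_of_subset_right h]

lemma inner_ballIndicatorLp_of_disjoint {c c' : X} {r r' : ℝ}
    (h : Disjoint (closedBall c r) (closedBall c' r')) :
    inner 𝕜 (ballIndicatorLp 𝕜 μ c r) (ballIndicatorLp 𝕜 μ c' r') = 0 :=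
  (L2.inner_indicatorConstLp_one_indicatorConstLp_one _ _ _ _).trans <| by
    rw [h.inter_eq, measureReal_empty, RCLike.ofReal_zero]

end BallIndicator

lemma preimage_zpow_mul_sub_closedBall {K : Type*} [NormedField K] {π : K} (hπ : π ≠ 0) (n : ℤ)
    (c y : K) (r : ℝ) :
    (fun x => π ^ (-n) * (x - c)) ⁻¹' closedBall y r =
      closedBall (c + π ^ n * y) (‖π‖ ^ n * r) := by
  ext x
  have hscale : x - (c + π ^ n * y) = π ^ n * (π ^ (-n) * (x - c) - y) := by
    rw [mul_sub, ← mul_assoc, ← zpow_add₀ hπ, add_neg_cancel, zpow_zero, one_mul, sub_sub]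
  rw [Set.mem_preimage, mem_closedBall, mem_closedBall, dist_eq_norm, dist_eq_norm, hscale,
    norm_mul, norm_zpow, mul_le_mul_iff_right₀ (zpow_pos (norm_pos_iff.2 hπ) n)]

/-- `π` is a uniformizer and `d` a system of digits: the integral elements are partitioned by the
balls of radius `‖π‖` about the `d i`. For a local field, this says that `d` represents the
residue field. -/
structure IsDigitSystem {K κ : Type*} [NormedField K] (π : K) (d : κ → K) : Prop where
  ne_zero : π ≠ 0
  norm_lt_one : ‖π‖ < 1
  closedBall_zero_one : closedBall 0 1 = ⋃ i, closedBall (d i) ‖π‖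
  pairwise_disjoint : Pairwise (Function.onFun Disjoint fun i => closedBall (d i) ‖π‖)

/-- The rows of `W` are the values of wavelet generators on the digit balls: they form an orthogonal
basis of the orthogonal complement of the constant vectors, normalized to have squared norm
`Fintype.card κ`. -/
structure IsWaveletFilter {𝕜 ι κ : Type*} [RCLike 𝕜] [Fintype κ] (W : ι → κ → 𝕜) : Prop where
  sum_eq_zero : ∀ ν, ∑ i, W ν i = 0
  sum_conj_mul_self : ∀ ν, ∑ i, starRingEnd 𝕜 (W ν i) * W ν i = Fintype.card κ
  sum_conj_mul_of_ne : ∀ ν ν', ν ≠ ν' → ∑ i, starRingEnd 𝕜 (W ν i) * W ν' i = 0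
  const_of_orthogonal : ∀ v : κ → 𝕜, (∀ ν, ∑ i, starRingEnd 𝕜 (W ν i) * v i = 0) →
    ∀ i k, v i = v k

/-- The function with value `w i` on the ball of radius `‖π‖` about the digit `d i`, vanishing off
these balls. -/
def digitStep {K κ 𝕜 : Type*} [NormedField K] [Fintype κ] [RCLike 𝕜] (π : K) (d : κ → K)
    (w : κ → 𝕜) (x : K) : 𝕜 :=
  ∑ i, (closedBall (d i) ‖π‖).indicator (fun _ => w i) x

lemma digitStep_of_notMem {K κ 𝕜 : Type*} [NormedField K] [Fintype κ] [RCLike 𝕜] {π : K} {d : κ → K}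
    {x : K} (hx : ∀ i, x ∉ closedBall (d i) ‖π‖) (w : κ → 𝕜) : digitStep π d w x = 0 :=
  Finset.sum_eq_zero fun i _ => Set.indicator_of_notMem (hx i) _

namespace IsDigitSystem

variable {K κ : Type*} [NormedField K] {π : K} {d : κ → K} (hd : IsDigitSystem π d)
include hd

lemma norm_pos : 0 < ‖π‖ := norm_pos_iff.2 hd.ne_zero

lemma digitStep_of_mem {𝕜 : Type*} [RCLike 𝕜] [Fintype κ] {x : K} {i : κ}
    (hx : x ∈ closedBall (d i) ‖π‖) (w : κ → 𝕜) : digitStep π d w x = w i := by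
  rw [digitStep, Finset.sum_eq_single i, Set.indicator_of_mem hx]
  · intro k _ hki
    exact Set.indicator_of_notMem ((hd.pairwise_disjoint hki).notMem_of_mem_right hx) _
  · exact fun h => absurd (Finset.mem_univ i) h

lemma closedBall_zpow_eq_iUnion (c : K) (n : ℤ) :
    closedBall c (‖π‖ ^ n) = ⋃ i, closedBall (c + π ^ n * d i) (‖π‖ ^ (n + 1)) := by
  simpa only [Set.preimage_iUnion, preimage_zpow_mul_sub_closedBall hd.ne_zero, mul_zero, add_zero,
    mul_one, ← zpow_add_one₀ hd.norm_pos.ne'] using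
    congrArg (fun s => (fun x => π ^ (-n) * (x - c)) ⁻¹' s) hd.closedBall_zero_one

lemma closedBall_digit_subset (c : K) (n : ℤ) (i : κ) :
    closedBall (c + π ^ n * d i) (‖π‖ ^ (n + 1)) ⊆ closedBall c (‖π‖ ^ n) := by
  rw [hd.closedBall_zpow_eq_iUnion c n]
  exact Set.subset_iUnion_of_subset i subset_rfl

lemma pairwise_disjoint_zpow (c : K) (n : ℤ) :
    Pairwise (Function.onFun Disjoint fun i => closedBall (c + π ^ n * d i) (‖π‖ ^ (n + 1))) := by
  intro i k hik
  simpa only [Function.onFun, preimage_zpow_mul_sub_closedBall hd.ne_zero,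
    ← zpow_add_one₀ hd.norm_pos.ne'] using
    (hd.pairwise_disjoint hik).preimage fun x => π ^ (-n) * (x - c)

lemma disjoint_closedBall_zpow_mul {a b : K} (h : Disjoint (closedBall a 1) (closedBall b 1))
    (j : ℤ) : Disjoint (closedBall (π ^ j * a) (‖π‖ ^ j)) (closedBall (π ^ j * b) (‖π‖ ^ j)) := by
  simpa only [preimage_zpow_mul_sub_closedBall hd.ne_zero, zero_add, mul_one] using
    h.preimage fun x => π ^ (-j) * (x - 0)

lemma exists_closedBall_zpow_mul_eq [IsUltrametricDist K] {I : Set K}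
    (hI : ∀ x : K, ∃ a : I, ‖x - a‖ ≤ 1) (c : K) (j : ℤ) :
    ∃ a : I, closedBall (π ^ j * a : K) (‖π‖ ^ j) = closedBall c (‖π‖ ^ j) := by
  obtain ⟨a, ha⟩ := hI (π ^ (-j) * c)
  refine ⟨a, IsUltrametricDist.closedBall_eq_of_mem ?_⟩
  have hmem : c ∈ (fun x => π ^ (-j) * (x - 0)) ⁻¹' closedBall (a : K) 1 := by
    simpa only [Set.mem_preimage, sub_zero, mem_closedBall_iff_norm] using ha
  rwa [preimage_zpow_mul_sub_closedBall hd.ne_zero, zero_add, mul_one] at hmem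

-- The digits of `0` and `1` differ, because `‖1 - 0‖` exceeds the diameter of a digit ball.
lemma one_lt_card [IsUltrametricDist K] [Fintype κ] : 1 < Fintype.card κ := by
  have hdigit : ∀ x ∈ closedBall (0 : K) 1, ∃ i, x ∈ closedBall (d i) ‖π‖ := fun x hx => by
    rwa [hd.closedBall_zero_one, Set.mem_iUnion] at hx
  obtain ⟨i, hi⟩ := hdigit 0 (mem_closedBall_self zero_le_one)
  obtain ⟨k, hk⟩ := hdigit 1 (by simp)
  refine Fintype.one_lt_card_iff.2 ⟨i, k, ?_⟩
  rintro rfl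
  rw [IsUltrametricDist.closedBall_eq_of_mem hi] at hk
  exact hd.norm_lt_one.not_ge (by simpa using hk)

lemma setIntegral_closedBall_zpow_eq_sum [Fintype κ] [MeasurableSpace K] [OpensMeasurableSpace K]
    {μ : Measure K} {E : Type*} [NormedAddCommGroup E] [NormedSpace ℝ E] {f : K → E} {c : K} {n : ℤ}
    (hf : IntegrableOn f (closedBall c (‖π‖ ^ n)) μ) :
    ∫ x in closedBall c (‖π‖ ^ n), f x ∂μ =
      ∑ i, ∫ x in closedBall (c + π ^ n * d i) (‖π‖ ^ (n + 1)), f x ∂μ := by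
  rw [hd.closedBall_zpow_eq_iUnion, integral_iUnion_fintype (fun i => measurableSet_closedBall)
    (hd.pairwise_disjoint_zpow c n) fun i => hf.mono_set (hd.closedBall_digit_subset c n i)]

section Measure

variable [Fintype κ] [ProperSpace K] [MeasurableSpace K] [BorelSpace K] {μ : Measure K}
  [μ.IsAddHaarMeasure]

lemma measureReal_closedBall_zpow_eq_card_mul (c c' : K) (n : ℤ) :
    μ.real (closedBall c (‖π‖ ^ n)) =
      Fintype.card κ * μ.real (closedBall c' (‖π‖ ^ (n + 1))) := by
  have htranslate : ∀ b, μ.real (closedBall b (‖π‖ ^ (n + 1))) =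
      μ.real (closedBall c' (‖π‖ ^ (n + 1))) := fun b => by
    rw [Measure.addHaar_real_closedBall_center, Measure.addHaar_real_closedBall_center μ c']
  rw [hd.closedBall_zpow_eq_iUnion, measureReal_iUnion_fintype (hd.pairwise_disjoint_zpow c n)
    (fun i => measurableSet_closedBall) fun i => measure_closedBall_lt_top.ne]
  simp only [htranslate, Finset.sum_const, Finset.card_univ, nsmul_eq_mul]

lemma measureReal_closedBall_zpow [IsUltrametricDist K] (hμ : μ (closedBall 0 1) = 1) (c : K)
    (n : ℤ) :
    μ.real (closedBall c (‖π‖ ^ n)) = (Fintype.card κ : ℝ) ^ (-n) := by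
  have hq : (Fintype.card κ : ℝ) ≠ 0 := by exact_mod_cast (zero_lt_one.trans hd.one_lt_card).ne'
  have hstep := hd.measureReal_closedBall_zpow_eq_card_mul (μ := μ)
  induction n generalizing c with
  | zero =>
    rw [zpow_zero, neg_zero, zpow_zero, measureReal_def, Measure.addHaar_closedBall_center, hμ,
      ENNReal.toReal_one]
  | succ n ih =>
    apply mul_left_cancel₀ hq
    rw [← hstep c c n, ih, ← zpow_one_add₀ hq]
    congr 1
    ring
  | pred n ih =>
    rw [hstep c c, sub_add_cancel, ih, ← zpow_one_add₀ hq]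
    congr 1
    ring

end Measure

end IsDigitSystem

section WaveletLp

variable {K κ 𝕜 : Type*} [NormedField K] [ProperSpace K] [MeasurableSpace K] [BorelSpace K]
  [Fintype κ] [RCLike 𝕜] (μ : Measure K) [IsFiniteMeasureOnCompacts μ] (π : K) (d : κ → K)

/-- The wavelet at scale `j` on the ball of radius `‖π‖ ^ j` about `c`, taking the values `w` (up to
`L²`-normalization) on its sub-balls of radius `‖π‖ ^ (j + 1)`. It is the rescaled `digitStep`, see
`coeFn_waveletLp`. -/
def waveletLp (c : K) (j : ℤ) (w : κ → 𝕜) : Lp 𝕜 2 μ :=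
  (((Fintype.card κ : ℝ) ^ ((j : ℝ) / 2) : ℝ) : 𝕜) •
    ∑ i, w i • ballIndicatorLp 𝕜 μ (c + π ^ j * d i) (‖π‖ ^ (j + 1))

variable {π d}

lemma coeFn_waveletLp (hπ : π ≠ 0) (c : K) (j : ℤ) (w : κ → 𝕜) :
    waveletLp μ π d c j w =ᵐ[μ] fun x =>
      (((Fintype.card κ : ℝ) ^ ((j : ℝ) / 2) : ℝ) : 𝕜) *
        digitStep π d w (π ^ (-j) * (x - c)) := by
  have hterm : ∀ i, ∀ᵐ x ∂μ,
      (w i • ballIndicatorLp 𝕜 μ (c + π ^ j * d i) (‖π‖ ^ (j + 1))) x =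
        (closedBall (d i) ‖π‖).indicator (fun _ => w i) (π ^ (-j) * (x - c)) := fun i => by
    filter_upwards [Lp.coeFn_smul (w i) (ballIndicatorLp 𝕜 μ (c + π ^ j * d i) (‖π‖ ^ (j + 1))),
      indicatorConstLp_coeFn (p := 2) (hs := measurableSet_closedBall)
        (hμs := (measure_closedBall_lt_top (μ := μ) (x := c + π ^ j * d i)
          (r := ‖π‖ ^ (j + 1))).ne) (c := (1 : 𝕜))] with x hsmul hball
    have hpre := preimage_zpow_mul_sub_closedBall hπ j c (d i) ‖π‖
    rw [← zpow_add_one₀ (norm_ne_zero_iff.2 hπ)] at hpre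
    rw [hsmul, Pi.smul_apply, ballIndicatorLp, hball, ← hpre, Set.indicator_apply,
      Set.indicator_apply, Set.mem_preimage, smul_ite, smul_zero, smul_eq_mul, mul_one]
  filter_upwards [Filter.eventually_all.2 hterm, Lp.coeFn_smul
      (((Fintype.card κ : ℝ) ^ ((j : ℝ) / 2) : ℝ) : 𝕜)
      (∑ i, w i • ballIndicatorLp 𝕜 μ (c + π ^ j * d i) (‖π‖ ^ (j + 1))),
    Lp.coeFn_fun_finsetSum Finset.univ
      fun i => w i • ballIndicatorLp 𝕜 μ (c + π ^ j * d i) (‖π‖ ^ (j + 1))] with x hx hsmul hsum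
  rw [waveletLp, hsmul, Pi.smul_apply, hsum, smul_eq_mul, digitStep]
  exact congrArg _ (Finset.sum_congr rfl fun i _ => hx i)

variable {μ}

lemma inner_waveletLp_left (c : K) (j : ℤ) (w : κ → 𝕜) (f : Lp 𝕜 2 μ) :
    inner 𝕜 (waveletLp μ π d c j w) f =
      (((Fintype.card κ : ℝ) ^ ((j : ℝ) / 2) : ℝ) : 𝕜) *
        ∑ i, starRingEnd 𝕜 (w i) *
          inner 𝕜 (ballIndicatorLp 𝕜 μ (c + π ^ j * d i) (‖π‖ ^ (j + 1))) f := by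
  simp only [waveletLp, inner_smul_left, sum_inner, RCLike.conj_ofReal]

lemma inner_waveletLp_right (c : K) (j : ℤ) (w : κ → 𝕜) (f : Lp 𝕜 2 μ) :
    inner 𝕜 f (waveletLp μ π d c j w) =
      (((Fintype.card κ : ℝ) ^ ((j : ℝ) / 2) : ℝ) : 𝕜) *
        ∑ i, w i * inner 𝕜 f (ballIndicatorLp 𝕜 μ (c + π ^ j * d i) (‖π‖ ^ (j + 1))) := by
  simp only [waveletLp, inner_smul_right, inner_sum]

end WaveletLp

namespace IsDigitSystem

section Orthogonality

variable {K κ 𝕜 : Type*} [NormedField K] [ProperSpace K] [MeasurableSpace K] [BorelSpace K]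
  [Fintype κ] [RCLike 𝕜] {μ : Measure K} {π : K} {d : κ → K} (hd : IsDigitSystem π d)
include hd

lemma inner_ballIndicatorLp_waveletLp_of_disjoint [IsFiniteMeasureOnCompacts μ] {c c' : K} {r : ℝ}
    {j : ℤ} (h : Disjoint (closedBall c r) (closedBall c' (‖π‖ ^ j))) (w : κ → 𝕜) :
    inner 𝕜 (ballIndicatorLp 𝕜 μ c r) (waveletLp μ π d c' j w) = 0 := by
  rw [inner_waveletLp_right, Finset.sum_eq_zero, mul_zero]
  intro i _
  rw [inner_ballIndicatorLp_of_disjoint (h.mono_right (hd.closedBall_digit_subset c' j i)),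
    mul_zero]

lemma inner_waveletLp_of_disjoint [IsFiniteMeasureOnCompacts μ] {c c' : K} {j k : ℤ}
    (h : Disjoint (closedBall c (‖π‖ ^ j)) (closedBall c' (‖π‖ ^ k))) (w w' : κ → 𝕜) :
    inner 𝕜 (waveletLp μ π d c j w) (waveletLp μ π d c' k w') = 0 := by
  rw [inner_waveletLp_left, Finset.sum_eq_zero, mul_zero]
  intro i _
  rw [hd.inner_ballIndicatorLp_waveletLp_of_disjoint
    (h.mono_left (hd.closedBall_digit_subset c j i)), mul_zero]

variable [μ.IsAddHaarMeasure]

lemma inner_ballIndicatorLp_waveletLp_of_subset {c c' : K} {r : ℝ} {j : ℤ}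
    (h : closedBall c' (‖π‖ ^ j) ⊆ closedBall c r) {w : κ → 𝕜} (hw : ∑ i, w i = 0) :
    inner 𝕜 (ballIndicatorLp 𝕜 μ c r) (waveletLp μ π d c' j w) = 0 := by
  have hball : ∀ i, inner 𝕜 (ballIndicatorLp 𝕜 μ c r)
      (ballIndicatorLp 𝕜 μ (c' + π ^ j * d i) (‖π‖ ^ (j + 1))) =
        (μ.real (closedBall 0 (‖π‖ ^ (j + 1))) : 𝕜) := fun i => by
    rw [inner_ballIndicatorLp_of_subset ((hd.closedBall_digit_subset c' j i).trans h),
      Measure.addHaar_real_closedBall_center]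
  simp only [inner_waveletLp_right, hball, ← Finset.sum_mul, hw, zero_mul, mul_zero]

variable [IsUltrametricDist K]

lemma inner_waveletLp_of_lt {c c' : K} {j k : ℤ} (hjk : j < k) (w : κ → 𝕜) {w' : κ → 𝕜}
    (hw' : ∑ i, w' i = 0) :
    inner 𝕜 (waveletLp μ π d c j w) (waveletLp μ π d c' k w') = 0 := by
  have hsub : closedBall c' (‖π‖ ^ k) ⊆ closedBall c' (‖π‖ ^ (j + 1)) :=
    closedBall_subset_closedBall (zpow_le_zpow_right_of_le_one₀ hd.norm_pos hd.norm_lt_one.le hjk)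
  rw [inner_waveletLp_left, Finset.sum_eq_zero, mul_zero]
  intro i _
  rcases IsUltrametricDist.closedBall_eq_or_disjoint (c + π ^ j * d i) c' (‖π‖ ^ (j + 1))
    with heq | hdisj
  · rw [hd.inner_ballIndicatorLp_waveletLp_of_subset (hsub.trans heq.ge) hw', mul_zero]
  · rw [hd.inner_ballIndicatorLp_waveletLp_of_disjoint (hdisj.mono_right hsub), mul_zero]

lemma inner_waveletLp_same (hμ : μ (closedBall 0 1) = 1) (c : K) (j : ℤ) (w w' : κ → 𝕜) :
    inner 𝕜 (waveletLp μ π d c j w) (waveletLp μ π d c j w') =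
      (Fintype.card κ : 𝕜)⁻¹ * ∑ i, starRingEnd 𝕜 (w i) * w' i := by
  have hq : (0 : ℝ) < Fintype.card κ := by exact_mod_cast zero_lt_one.trans hd.one_lt_card
  set s : ℝ := (Fintype.card κ : ℝ) ^ ((j : ℝ) / 2) with hs
  set m : ℝ := (Fintype.card κ : ℝ) ^ (-(j + 1)) with hm
  have hscale : s * (s * m) = (Fintype.card κ : ℝ)⁻¹ := by
    rw [← mul_assoc, hs, ← Real.rpow_add hq, add_halves, Real.rpow_intCast, hm,
      ← zpow_add₀ hq.ne', neg_add, add_neg_cancel_left, zpow_neg_one]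
  have hball : ∀ i, inner 𝕜 (ballIndicatorLp 𝕜 μ (c + π ^ j * d i) (‖π‖ ^ (j + 1)))
      (waveletLp μ π d c j w') = ((s * m : ℝ) : 𝕜) * w' i := fun i => by
    rw [inner_waveletLp_right, Finset.sum_eq_single i, inner_ballIndicatorLp_of_subset subset_rfl,
      hd.measureReal_closedBall_zpow hμ, RCLike.ofReal_mul, mul_comm (w' i), mul_assoc]
    · intro k _ hki
      rw [inner_ballIndicatorLp_of_disjoint (hd.pairwise_disjoint_zpow c j hki.symm), mul_zero]
    · exact fun h => absurd (Finset.mem_univ i) h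
  rw [inner_waveletLp_left]
  simp only [hball, mul_left_comm (starRingEnd 𝕜 _), ← Finset.mul_sum]
  rw [← mul_assoc, ← RCLike.ofReal_mul, hscale, RCLike.ofReal_inv, RCLike.ofReal_natCast]

end Orthogonality

section WaveletBasis

variable {K κ ι 𝕜 : Type*} [NormedField K] [ProperSpace K] [IsUltrametricDist K]
  [MeasurableSpace K] [BorelSpace K] [Fintype κ] [RCLike 𝕜] {μ : Measure K} [μ.IsAddHaarMeasure]
  {π : K} {d : κ → K} {I : Set K} {W : ι → κ → 𝕜} (hd : IsDigitSystem π d)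
include hd

lemma orthonormal_waveletLp (hμ : μ (closedBall 0 1) = 1)
    (hI : Pairwise fun a b : I => Disjoint (closedBall (a : K) 1) (closedBall (b : K) 1))
    (hW : IsWaveletFilter W) :
    Orthonormal 𝕜 fun p : ℤ × I × ι => waveletLp μ π d (π ^ p.1 * p.2.1) p.1 (W p.2.2) := by
  have hq : (Fintype.card κ : 𝕜) ≠ 0 := by exact_mod_cast (zero_lt_one.trans hd.one_lt_card).ne'
  refine ⟨fun ⟨j, a, ν⟩ => ?_, fun ⟨j, a, ν⟩ ⟨k, b, ν'⟩ hne => ?_⟩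
  · rw [← sq_eq_sq₀ (norm_nonneg _) zero_le_one, ← RCLike.ofReal_inj (K := 𝕜), RCLike.ofReal_pow,
      ← inner_self_eq_norm_sq_to_K, hd.inner_waveletLp_same hμ, hW.sum_conj_mul_self,
      inv_mul_cancel₀ hq, one_pow, RCLike.ofReal_one]
  rcases lt_trichotomy j k with hjk | rfl | hkj
  · exact hd.inner_waveletLp_of_lt hjk _ (hW.sum_eq_zero _)
  · by_cases hab : a = b
    · subst hab
      have hν : ν ≠ ν' := fun h => hne (by rw [h])
      simp only [hd.inner_waveletLp_same hμ, hW.sum_conj_mul_of_ne ν ν' hν, mul_zero]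
    · exact hd.inner_waveletLp_of_disjoint (hd.disjoint_closedBall_zpow_mul (hI hab) j) _ _
  · exact inner_eq_zero_symm.1 (hd.inner_waveletLp_of_lt hkj _ (hW.sum_eq_zero _))

-- Orthogonality to the wavelets living on a ball says that `f` has equal integrals over the
-- sub-balls of the next scale, which therefore share the integral over the whole ball equally.
lemma setIntegral_closedBall_zpow_eq_card_mul (hI : ∀ x : K, ∃ a : I, ‖x - a‖ ≤ 1)
    (hW : IsWaveletFilter W) {f : Lp 𝕜 2 μ}
    (hf : ∀ (j : ℤ) (a : I) (ν : ι), inner 𝕜 (waveletLp μ π d (π ^ j * a) j (W ν)) f = 0)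
    (c : K) (n : ℤ) :
    ∫ x in closedBall c (‖π‖ ^ n), f x ∂μ =
      Fintype.card κ * ∫ x in closedBall c (‖π‖ ^ (n + 1)), f x ∂μ := by
  have hq : (0 : ℝ) < Fintype.card κ := by exact_mod_cast zero_lt_one.trans hd.one_lt_card
  obtain ⟨a, ha⟩ := hd.exists_closedBall_zpow_mul_eq hI c n
  set F : κ → 𝕜 := fun i => ∫ x in closedBall (π ^ n * a + π ^ n * d i) (‖π‖ ^ (n + 1)), f x ∂μ
  have horth : ∀ ν, ∑ i, starRingEnd 𝕜 (W ν i) * F i = 0 := fun ν => by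
    have hscale : (((Fintype.card κ : ℝ) ^ ((n : ℝ) / 2) : ℝ) : 𝕜) ≠ 0 :=
      RCLike.ofReal_ne_zero.2 (Real.rpow_pos_of_pos hq _).ne'
    simpa only [inner_waveletLp_left, inner_ballIndicatorLp, mul_eq_zero, hscale, false_or] using
      hf n a ν
  have hc : c ∈ closedBall (π ^ n * a : K) (‖π‖ ^ n) :=
    ha ▸ mem_closedBall_self (zpow_pos hd.norm_pos n).le
  rw [hd.closedBall_zpow_eq_iUnion, Set.mem_iUnion] at hc
  obtain ⟨k, hk⟩ := hc
  calc ∫ x in closedBall c (‖π‖ ^ n), f x ∂μ = ∑ i, F i := by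
        rw [← ha]
        exact hd.setIntegral_closedBall_zpow_eq_sum <| integrableOn_Lp_of_measure_ne_top f
          fact_one_le_two_ennreal.elim measure_closedBall_lt_top.ne
    _ = Fintype.card κ * F k := by
        simp only [hW.const_of_orthogonal F horth _ k, Finset.sum_const, Finset.card_univ,
          nsmul_eq_mul]
    _ = _ := by rw [← IsUltrametricDist.closedBall_eq_of_mem hk]

lemma setIntegral_closedBall_zpow_eq_zero (hμ : μ (closedBall 0 1) = 1) {f : Lp 𝕜 2 μ} {c : K}
    (hstep : ∀ n : ℤ, ∫ x in closedBall c (‖π‖ ^ n), f x ∂μ =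
      Fintype.card κ * ∫ x in closedBall c (‖π‖ ^ (n + 1)), f x ∂μ) (n : ℤ) :
    ∫ x in closedBall c (‖π‖ ^ n), f x ∂μ = 0 := by
  have hq : (1 : ℝ) < Fintype.card κ := by exact_mod_cast hd.one_lt_card
  have hq0 : (0 : ℝ) < Fintype.card κ := zero_lt_one.trans hq
  set t := ‖∫ x in closedBall c (‖π‖ ^ n), f x ∂μ‖
  have hgrow : ∀ k : ℕ, ‖∫ x in closedBall c (‖π‖ ^ (n - k)), f x ∂μ‖ =
      (Fintype.card κ : ℝ) ^ k * t := fun k => by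
    induction k with
    | zero => simp [t]
    | succ k ih =>
      rw [hstep, norm_mul, Nat.cast_succ, ← sub_sub, sub_add_cancel, ih, pow_succ',
        RCLike.norm_natCast, mul_assoc]
  have hbound : ∀ k : ℕ, (Fintype.card κ : ℝ) ^ k * t ^ 2 ≤
      (Fintype.card κ : ℝ) ^ (-n) * ‖f‖ ^ 2 := fun k => by
    have hsq := norm_setIntegral_sq_le (μ := μ) measurableSet_closedBall
      (measure_closedBall_lt_top (x := c) (r := ‖π‖ ^ (n - k))).ne f
    rw [hgrow, hd.measureReal_closedBall_zpow hμ, neg_sub, sub_eq_add_neg, zpow_add₀ hq0.ne',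
      zpow_natCast, mul_pow, sq (_ ^ k), mul_assoc, mul_assoc] at hsq
    exact le_of_mul_le_mul_left hsq (pow_pos hq0 k)
  by_contra hne
  have ht : 0 < t ^ 2 := pow_pos (norm_pos_iff.2 hne) 2
  obtain ⟨k, hk⟩ := pow_unbounded_of_one_lt ((Fintype.card κ : ℝ) ^ (-n) * ‖f‖ ^ 2 / t ^ 2) hq
  exact (hbound k).not_gt ((div_lt_iff₀ ht).1 hk)

lemma Lp_eq_zero_of_forall_inner_waveletLp_eq_zero (hμ : μ (closedBall 0 1) = 1)
    (hI : ∀ x : K, ∃ a : I, ‖x - a‖ ≤ 1) (hW : IsWaveletFilter W) {f : Lp 𝕜 2 μ}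
    (hf : ∀ (j : ℤ) (a : I) (ν : ι), inner 𝕜 (waveletLp μ π d (π ^ j * a) j (W ν)) f = 0) :
    f = 0 := by
  rw [Lp.eq_zero_iff_ae_eq_zero]
  refine ae_eq_zero_of_forall_setIntegral_closedBall_eq_zero_s19
    (R := Set.range fun n : ℤ => ‖π‖ ^ n) ?_ ?_ ?_ ?_ ?_
  · rintro _ ⟨n, rfl⟩
    exact zpow_pos hd.norm_pos n
  · intro ε hε
    obtain ⟨n, hn⟩ := exists_pow_lt_of_lt_one hε hd.norm_lt_one
    exact ⟨_, ⟨n, zpow_natCast ‖π‖ n⟩, hn.le⟩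
  · intro C
    obtain ⟨n, hn⟩ := pow_unbounded_of_one_lt C ((one_lt_inv₀ hd.norm_pos).2 hd.norm_lt_one)
    exact ⟨_, ⟨-n, rfl⟩, by simpa only [zpow_neg, zpow_natCast, inv_pow] using hn.le⟩
  · exact fun c r _ => integrableOn_Lp_of_measure_ne_top f fact_one_le_two_ennreal.elim
      measure_closedBall_lt_top.ne
  · rintro c _ ⟨n, rfl⟩
    exact hd.setIntegral_closedBall_zpow_eq_zero hμ
      (hd.setIntegral_closedBall_zpow_eq_card_mul hI hW hf c) n

lemma topologicalClosure_span_waveletLp (hμ : μ (closedBall 0 1) = 1)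
    (hI : ∀ x : K, ∃ a : I, ‖x - a‖ ≤ 1) (hW : IsWaveletFilter W) :
    (Submodule.span 𝕜 (Set.range fun p : ℤ × I × ι =>
      waveletLp μ π d (π ^ p.1 * p.2.1) p.1 (W p.2.2))).topologicalClosure = ⊤ := by
  rw [Submodule.topologicalClosure_eq_top_iff, Submodule.eq_bot_iff]
  intro f hf
  exact hd.Lp_eq_zero_of_forall_inner_waveletLp_eq_zero hμ hI hW fun j a ν =>
    (Submodule.mem_orthogonal _ f).1 hf _ (Submodule.subset_span ⟨(j, a, ν), rfl⟩)

end WaveletBasis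

end IsDigitSystem

theorem padic_3adic_wavelet_basis_general {K κ ι 𝕜 : Type*} [NormedField K] [ProperSpace K]
    [IsUltrametricDist K] [MeasurableSpace K] [BorelSpace K] [Fintype κ] [RCLike 𝕜] {π : K}
    {d : κ → K} {I : Set K} {W : ι → κ → 𝕜} (hd : IsDigitSystem π d)
    (hI : ∀ x : K, ∃! a : I, ‖x - a‖ ≤ 1) (hW : IsWaveletFilter W)
    (μ : Measure K) [μ.IsAddHaarMeasure] (hμ : μ (closedBall 0 1) = 1) :
    ∃ E : ℤ × I × ι → Lp 𝕜 2 μ,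
      (∀ (j : ℤ) (a : I) (ν : ι),
        E (j, a, ν) =ᵐ[μ] fun x =>
          (((Fintype.card κ : ℝ) ^ ((j : ℝ) / 2) : ℝ) : 𝕜) *
            digitStep π d (W ν) (π ^ (-j) * x - a)) ∧
        Orthonormal 𝕜 E ∧
        (Submodule.span 𝕜 (Set.range E)).topologicalClosure = ⊤ := by
  have hdisj : Pairwise fun a b : I => Disjoint (closedBall (a : K) 1) (closedBall (b : K) 1) :=
    fun a b hab => Set.disjoint_left.2 fun x hxa hxb => hab <|
      (hI x).unique (mem_closedBall_iff_norm.1 hxa) (mem_closedBall_iff_norm.1 hxb)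
  refine ⟨fun p => waveletLp μ π d (π ^ p.1 * p.2.1) p.1 (W p.2.2), fun j a ν => ?_,
    hd.orthonormal_waveletLp hμ hdisj hW,
    hd.topologicalClosure_span_waveletLp hμ (fun x => (hI x).exists) hW⟩
  simpa only [mul_sub, ← mul_assoc, ← zpow_add₀ hd.ne_zero, neg_add_cancel, zpow_zero, one_mul]
    using coeFn_waveletLp μ hd.ne_zero (π ^ j * (a : K)) j (W ν)

section Padic

variable {p : ℕ} [Fact p.Prime]

lemma exists_natCast_norm_sub_le {x : ℚ_[p]} (hx : ‖x‖ ≤ 1) (n : ℕ) :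
    ∃ a < p ^ n, ‖x - (a : ℚ_[p])‖ ≤ (p : ℝ) ^ (-n : ℤ) := by
  have happr := PadicInt.appr_spec n (⟨x, hx⟩ : ℤ_[p])
  rw [← PadicInt.norm_le_pow_iff_mem_span_pow, PadicInt.norm_def] at happr
  exact ⟨_, PadicInt.appr_lt _ n, happr⟩

lemma natCast_eq_of_norm_sub_le {a b n : ℕ} (ha : a < p ^ n) (hb : b < p ^ n)
    (h : ‖(a - b : ℚ_[p])‖ ≤ (p : ℝ) ^ (-n : ℤ)) : a = b := by
  have hdvd := (Padic.norm_int_le_pow_iff_dvd (p := p) (a - b) n).1 (by exact_mod_cast h)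
  exact ((Nat.modEq_iff_dvd.2 (by exact_mod_cast hdvd)).eq_of_lt_of_lt hb ha).symm

lemma isDigitSystem_padic : IsDigitSystem (p : ℚ_[p]) fun i : Fin p => ((i : ℕ) : ℚ_[p]) where
  ne_zero := by exact_mod_cast (Fact.out : p.Prime).ne_zero
  norm_lt_one := Padic.norm_p_lt_one
  closedBall_zero_one := by
    have hsub : ∀ i : Fin p, closedBall ((i : ℕ) : ℚ_[p]) ‖(p : ℚ_[p])‖ ⊆ closedBall 0 1 :=
      fun i => by
        have hi : ((i : ℕ) : ℚ_[p]) ∈ closedBall 0 1 :=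
          mem_closedBall_zero_iff.2 (by exact_mod_cast Padic.norm_int_le_one (i : ℤ))
        exact (closedBall_subset_closedBall Padic.norm_p_lt_one.le).trans
          (IsUltrametricDist.closedBall_eq_of_mem hi).ge
    refine subset_antisymm (fun x hx => ?_) (Set.iUnion_subset hsub)
    obtain ⟨a, ha, hxa⟩ := exists_natCast_norm_sub_le (mem_closedBall_zero_iff.1 hx) 1
    rw [Nat.cast_one, zpow_neg_one, ← Padic.norm_p] at hxa
    exact Set.mem_iUnion.2 ⟨⟨a, by rwa [pow_one] at ha⟩, mem_closedBall_iff_norm.2 hxa⟩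
  pairwise_disjoint := fun i k hik => by
    refine (IsUltrametricDist.closedBall_eq_or_disjoint _ _ _).resolve_left fun heq => hik ?_
    have hmem : ((i : ℕ) : ℚ_[p]) ∈ closedBall ((k : ℕ) : ℚ_[p]) ‖(p : ℚ_[p])‖ :=
      heq ▸ mem_closedBall_self (norm_nonneg _)
    rw [mem_closedBall_iff_norm, Padic.norm_p, ← zpow_neg_one] at hmem
    exact Fin.ext (natCast_eq_of_norm_sub_le (p := p) (n := 1) (by simp) (by simp) hmem)

lemma exists_norm_sub_natCast_div_pow_le (x : ℚ_[p]) :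
    ∃ γ a : ℕ, a < p ^ γ ∧ ‖x - (a : ℚ_[p]) / (p : ℚ_[p]) ^ γ‖ ≤ 1 := by
  have hp : (p : ℚ_[p]) ≠ 0 := isDigitSystem_padic.ne_zero
  obtain ⟨γ, hγ⟩ := pow_unbounded_of_one_lt ‖x‖
    (by exact_mod_cast (Fact.out : p.Prime).one_lt : (1 : ℝ) < p)
  have hpow : ‖(p : ℚ_[p]) ^ γ‖ = (p : ℝ) ^ (-γ : ℤ) := Padic.norm_p_pow γ
  have hint : ‖x * (p : ℚ_[p]) ^ γ‖ ≤ 1 := by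
    rw [norm_mul, hpow, zpow_neg, zpow_natCast, ← div_eq_mul_inv]
    exact div_le_one_of_le₀ hγ.le (by positivity)
  obtain ⟨a, ha, hxa⟩ := exists_natCast_norm_sub_le hint γ
  refine ⟨γ, a, ha, ?_⟩
  rw [sub_div' (pow_ne_zero γ hp), norm_div, hpow]
  exact div_le_one_of_le₀ hxa (by positivity)

-- Over the common denominator `p ^ (γ + δ)` both numerators are naturals below `p ^ (γ + δ)`.
lemma natCast_div_pow_eq_of_norm_sub_le_one {a b γ δ : ℕ} (ha : a < p ^ γ) (hb : b < p ^ δ)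
    (h : ‖(a / p ^ γ - b / p ^ δ : ℚ_[p])‖ ≤ 1) : (a / p ^ γ : ℚ_[p]) = b / p ^ δ := by
  have hp : (p : ℚ_[p]) ≠ 0 := isDigitSystem_padic.ne_zero
  have hp0 : 0 < p := (Fact.out : p.Prime).pos
  have hnum : ((a * p ^ δ : ℕ) - (b * p ^ γ : ℕ) : ℚ_[p]) =
      (a / p ^ γ - b / p ^ δ) * p ^ (γ + δ) := by
    push_cast
    field_simp
    ring
  have heq : a * p ^ δ = b * p ^ γ := by
    refine natCast_eq_of_norm_sub_le (p := p) (n := γ + δ) ?_ ?_ ?_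
    · rw [pow_add]
      gcongr
    · rw [add_comm, pow_add]
      gcongr
    · rw [hnum, norm_mul, Padic.norm_p_pow]
      exact mul_le_of_le_one_left (by positivity) h
  rw [div_eq_div_iff (pow_ne_zero γ hp) (pow_ne_zero δ hp)]
  exact_mod_cast heq

end Padic

lemma existsUnique_I3_norm_sub_le_one (x : ℚ_[3]) : ∃! a : I3, ‖x - a‖ ≤ 1 := by
  obtain ⟨γ, a, ha, hxa⟩ := exists_norm_sub_natCast_div_pow_le x
  refine ⟨⟨_, γ, a, ha, rfl⟩, by exact_mod_cast hxa, ?_⟩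
  rintro ⟨_, δ, b, hb, rfl⟩ hxb
  refine Subtype.ext (natCast_div_pow_eq_of_norm_sub_le_one hb ha ?_)
  rw [← dist_eq_norm]
  refine (dist_triangle_max _ x _).trans (max_le ?_ ?_)
  · rwa [dist_comm, dist_eq_norm]
  · exact_mod_cast (dist_eq_norm x _).trans_le hxa

lemma isWaveletFilter_of_sq_eq {s r : ℝ} (hs : s ^ 2 = 3 / 2) (hr : r ^ 2 = 2) :
    IsWaveletFilter (![![-s, s, 0], ![-(r⁻¹ : ℝ), -(r⁻¹ : ℝ), r]] : Fin 2 → Fin 3 → ℂ) := by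
  have hs0 : s ≠ 0 := fun h => by norm_num [h] at hs
  have hr0 : r ≠ 0 := fun h => by norm_num [h] at hr
  have hinv : r⁻¹ = r / 2 := by
    rw [inv_eq_iff_eq_inv, inv_div, ← hr, sq, mul_div_cancel_right₀ _ hr0]
  rw [hinv]
  set W : Fin 2 → Fin 3 → ℂ := ![![-s, s, 0], ![-(r / 2 : ℝ), -(r / 2 : ℝ), r]]
  have hrow0 : ∀ v : Fin 3 → ℂ, ∑ i, starRingEnd ℂ (W 0 i) * v i = s * (v 1 - v 0) := fun v => by
    simp only [W, Fin.sum_univ_three, Matrix.cons_val, map_neg, Complex.conj_ofReal, map_zero]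
    ring
  have hrow1 : ∀ v : Fin 3 → ℂ,
      ∑ i, starRingEnd ℂ (W 1 i) * v i = r * (v 2 - (v 0 + v 1) / 2) := fun v => by
    simp only [W, Fin.sum_univ_three, Matrix.cons_val, map_neg, Complex.conj_ofReal]
    push_cast
    ring
  have hs' : (s : ℂ) ^ 2 = 3 / 2 := by rw [← Complex.ofReal_pow, hs]; norm_num
  have hr' : (r : ℂ) ^ 2 = 2 := by rw [← Complex.ofReal_pow, hr]; norm_num
  refine ⟨Fin.forall_fin_two.2 ⟨?_, ?_⟩, Fin.forall_fin_two.2 ⟨?_, ?_⟩, fun ν ν' hν => ?_,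
    fun v hv => ?_⟩
  · simp [W, Fin.sum_univ_three]
  · simp [W, Fin.sum_univ_three, ← two_mul, mul_div_cancel₀]
  · rw [hrow0, Fintype.card_fin]
    change (s : ℂ) * (s - -s) = (3 : ℕ)
    push_cast
    linear_combination 2 * hs'
  · rw [hrow1, Fintype.card_fin]
    change (r : ℂ) * (r - (-(r / 2 : ℝ) + -(r / 2 : ℝ)) / 2) = (3 : ℕ)
    push_cast
    linear_combination 3 / 2 * hr'
  · fin_cases ν <;> fin_cases ν'
    exacts [absurd rfl hν, (hrow0 _).trans (by simp [W]), (hrow1 _).trans (by simp [W]),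
      absurd rfl hν]
  · have h01 : v 1 = v 0 := sub_eq_zero.1 <|
      (mul_eq_zero.1 ((hrow0 v).symm.trans (hv 0))).resolve_left (Complex.ofReal_ne_zero.2 hs0)
    have h2 : v 2 = v 0 := by
      rw [sub_eq_zero.1 <| (mul_eq_zero.1 ((hrow1 v).symm.trans (hv 1))).resolve_left
        (Complex.ofReal_ne_zero.2 hr0), h01, add_self_div_two]
    have hconst : ∀ i, v i = v 0 := fun i => by fin_cases i; exacts [rfl, h01, h2]
    exact fun i k => (hconst i).trans (hconst k).symm

/-- The values of `psi ν` on the balls of radius `1 / 3` about `0`, `1`, `2`. -/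
def psiFilter : Fin 2 → Fin 3 → ℂ :=
  ![![-(√(3 / 2) : ℝ), (√(3 / 2) : ℝ), 0], ![-((√2)⁻¹ : ℝ), -((√2)⁻¹ : ℝ), (√2 : ℝ)]]

lemma isWaveletFilter_psiFilter : IsWaveletFilter psiFilter :=
  isWaveletFilter_of_sq_eq (Real.sq_sqrt (by positivity)) (Real.sq_sqrt zero_le_two)

lemma digitStep_psiFilter (ν : Fin 2) (x : ℚ_[3]) :
    digitStep (3 : ℚ_[3]) (fun i : Fin 3 => ((i : ℕ) : ℚ_[3])) (psiFilter ν) x = psi ν x := by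
  have hd : IsDigitSystem (3 : ℚ_[3]) fun i : Fin 3 => ((i : ℕ) : ℚ_[3]) := isDigitSystem_padic
  have hmem : ∀ i : Fin 3, x ∈ closedBall ((i : ℕ) : ℚ_[3]) ‖(3 : ℚ_[3])‖ ↔
      ‖x - ((i : ℕ) : ℚ_[3])‖ ≤ 1 / 3 := fun i => by
    rw [mem_closedBall_iff_norm, one_div]
    exact_mod_cast Iff.of_eq (congrArg (_ ≤ ·) (Padic.norm_p (p := 3)))
  by_cases h0 : ‖x‖ ≤ 1 / 3
  · rw [hd.digitStep_of_mem ((hmem 0).2 (by simpa using h0))]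
    fin_cases ν
    exacts [(if_pos h0).symm, (if_pos h0).symm]
  by_cases h1 : ‖x - 1‖ ≤ 1 / 3
  · rw [hd.digitStep_of_mem ((hmem 1).2 (by simpa using h1))]
    fin_cases ν
    exacts [((if_neg h0).trans (if_pos h1)).symm, ((if_neg h0).trans (if_pos h1)).symm]
  by_cases h2 : ‖x - 2‖ ≤ 1 / 3
  · rw [hd.digitStep_of_mem ((hmem 2).2 (by simpa using h2))]
    fin_cases ν
    exacts [((if_neg h0).trans ((if_neg h1).trans (if_pos h2))).symm,
      ((if_neg h0).trans ((if_neg h1).trans (if_pos h2))).symm]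
  · have hnot : ∀ i : Fin 3, ¬‖x - ((i : ℕ) : ℚ_[3])‖ ≤ 1 / 3 := fun i => by
      fin_cases i
      exacts [by simpa using h0, by simpa using h1, by simpa using h2]
    rw [digitStep_of_notMem fun i => (hmem i).not.2 (hnot i)]
    fin_cases ν
    exacts [((if_neg h0).trans ((if_neg h1).trans (if_neg h2))).symm,
      ((if_neg h0).trans ((if_neg h1).trans (if_neg h2))).symm]

/-- A `3`-adic wavelet basis: the system
`{3^{j/2} ψ^{(ν)}(3^{−j}x − a) : j ∈ ℤ, a ∈ I_3, ν ∈ {1,2}}` is an orthonormal basis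
of `L²(ℚ_3)` (`μ` the normalized Haar measure). -/
theorem padic_3adic_wavelet_basis
    (μ : Measure ℚ_[3]) [μ.IsAddHaarMeasure] (hμ : μ (closedBall 0 1) = 1) :
    ∃ E : ℤ × I3 × Fin 2 → Lp ℂ 2 μ,
      (∀ (j : ℤ) (a : I3) (ν : Fin 2),
        ↑↑(E (j, a, ν)) =ᵐ[μ] fun x =>
          (((3 : ℝ) ^ ((j : ℝ) / 2) : ℝ) : ℂ) * psi ν ((3 : ℚ_[3]) ^ (-j) * x - (a : ℚ_[3]))) ∧
        Orthonormal ℂ E ∧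
        (Submodule.span ℂ (Set.range E)).topologicalClosure = ⊤ := by
  simpa [digitStep_psiFilter] using padic_3adic_wavelet_basis_general isDigitSystem_padic
    existsUnique_I3_norm_sub_le_one isWaveletFilter_psiFilter μ hμ

end
end
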